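/- arXiv:2408.04143 — 4 statements merged into one kernel-verified Lean document; each statement's English description precedes it below -/
import Mathlib

section
/- The limit superior s_3 = limsup_{x→∞} |W_3(x)|/x^{log 3/log 2} satisfies |s_3 − 0.813| ≤ 0.158; in particular s_3 < 1. -/
open Finset Filter ArithmeticFunction Real

/-- `Wa a x = ∑_{1 ≤ n ≤ x} (-a)^{Ω(n)}`. -/
noncomputable def Wa (a x : ℝ) : ℝ :=
  ∑ n ∈ Finset.Icc 1 ⌊x⌋₊, (-a) ^ (cardFactors n)

/-! ### Kernel-friendly computation -/

/-- force the evaluation of a natural number before passing it on -/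
noncomputable def force {α : Type} (n : ℕ) (k : ℕ → α) : α :=
  Nat.rec (k 0) (fun m _ => k (Nat.succ m)) n

theorem force_eq {α : Type} (n : ℕ) (k : ℕ → α) : force n k = k n := by
  cases n <;> rfl

/-- one step of trial division -/
noncomputable def omStep (ih : List ℕ → ℕ → ℕ → ℕ) (ps : List ℕ) (n acc : ℕ) : ℕ :=
  match ps with
  | [] => acc
  | p :: t =>
    cond (Nat.ble (Nat.mul p p) n)
      (Nat.rec (force (Nat.div n p) (fun n' => ih ps n' (Nat.succ acc)))
        (fun _ _ => ih t n acc) (Nat.mod n p))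
      (cond (Nat.ble n 1) acc (Nat.succ acc))

/-- number of prime factors by trial division -/
noncomputable def om (fuel : ℕ) : List ℕ → ℕ → ℕ → ℕ :=
  Nat.rec (fun _ _ acc => acc) (fun _ ih => omStep ih) fuel

def plist : List ℕ := [2, 3, 5, 7, 11, 13, 17, 19, 23, 29, 31, 37, 41, 43, 47, 53, 59, 61, 67, 71,
  73, 79, 83, 89, 97, 101, 103, 107, 109, 113, 127, 131, 137, 139, 149, 151, 157, 163, 167, 173,
  179, 181, 191]

/-- scale for the powers `n ^ θ` -/
abbrev sS : ℕ := 65536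
/-- scale for the sums and products -/
abbrev sT : ℕ := 1099511627776

/-- move on to the next integer after checking the size of the weighted sum -/
noncomputable def nxt (Fn lo : ℕ) (ih : ℕ → ℕ → ℕ → ℕ → ℕ → Bool) (n P M C E : ℕ) : Bool :=
  force P fun P => force M fun M => force C fun C => force E fun E =>
  cond (Nat.ble (65536000 * P) (65536000 * M + 4 * Fn * lo) &&
      Nat.ble (65536000 * M) (65536000 * P + 4 * Fn * lo))
    (force (Nat.succ n) fun n => ih n P M C E) false

noncomputable def runStep (Fn lo hi : ℕ) (ih : ℕ → ℕ → ℕ → ℕ → ℕ → Bool) (n P M C E : ℕ) : Bool :=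
  force (om 60 plist n 0) fun w => force (Nat.pow 3 w) fun t =>
    cond (Nat.beq (Nat.mod n 2) 1)
      (cond (Nat.beq w 1)
        (cond (Nat.ble (3 * sS + 1) lo)
          (nxt Fn lo ih n P (M + 3 * t) (C + t * (sS * sT) / hi) (E * lo / (lo - 3 * sS) + 1))
          false)
        (cond (Nat.beq (Nat.mod w 2) 1)
          (nxt Fn lo ih n P (M + 3 * t) (C + t * (sS * sT) / hi) E)
          (nxt Fn lo ih n (P + 3 * t) M (C + t * (sS * sT) / hi) E)))
      (cond (Nat.beq (Nat.mod w 2) 1)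
        (nxt Fn lo ih n P (M + 4 * t) C E)
        (nxt Fn lo ih n (P + 4 * t) M C E))

noncomputable def run (Fn lo hi Pe Me Ce Ee : ℕ) (len : ℕ) : ℕ → ℕ → ℕ → ℕ → ℕ → Bool :=
  Nat.rec (fun _ P M C E => Nat.beq P Pe && Nat.beq M Me && Nat.beq C Ce && Nat.beq E Ee)
    (fun _ ih => runStep Fn lo hi ih) len

/-- a block of consecutive integers with its final state -/
structure Row where
  len : ℕ
  ul : ℕ
  uh : ℕ
  lo : ℕ
  hi : ℕ
  P : ℕ
  M : ℕ
  C : ℕ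
  E : ℕ

def certL (lo u n : ℕ) : Bool :=
  Nat.ble (Nat.pow 2 u) (Nat.pow n 4096) &&
    Nat.ble (Nat.pow lo 4096) (Nat.mul (Nat.pow 3 u) (Nat.pow 65536 4096))

def certH (hi u n : ℕ) : Bool :=
  Nat.ble (Nat.pow n 4096) (Nat.pow 2 u) &&
    Nat.ble (Nat.mul (Nat.pow 3 u) (Nat.pow 65536 4096)) (Nat.pow hi 4096)

noncomputable def chk (Fn ne Pe Me Ce Ee : ℕ) (rows : List Row) : ℕ → ℕ → ℕ → ℕ → ℕ → Bool :=
  List.rec (fun n P M C E => Nat.beq n ne && Nat.beq P Pe && Nat.beq M Me &&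
      Nat.beq C Ce && Nat.beq E Ee)
    (fun r _ ih n P M C E =>
      certL r.lo r.ul n && certH r.hi r.uh (n + r.len - 1) &&
      (run Fn r.lo r.hi r.P r.M r.C r.E r.len n P M C E &&
        force (n + r.len) fun n' => ih n' r.P r.M r.C r.E)) rows


/-! ### Soundness of the computation -/

/-- the exponent `log 3 / log 2` -/
noncomputable def th : ℝ := Real.log 3 / Real.log 2

theorem th_pos : 0 < th := by
  unfold th
  exact div_pos (Real.log_pos (by norm_num)) (Real.log_pos (by norm_num))

theorem two_rpow_th : (2 : ℝ) ^ th = 3 := by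
  unfold th
  rw [Real.rpow_def_of_pos (by norm_num), mul_div_cancel₀, Real.exp_log (by norm_num)]
  exact (Real.log_pos (by norm_num)).ne'

theorem pow_rpow_th (x : ℝ) (hx : 0 ≤ x) (k : ℕ) : (x ^ k) ^ th = (x ^ th) ^ k := by
  rw [← Real.rpow_natCast, ← Real.rpow_natCast, ← Real.rpow_mul hx, ← Real.rpow_mul hx, mul_comm]

theorem certL_aux {lo u n V : ℕ} (hV : V ≠ 0) (h1 : 2 ^ u ≤ n ^ V)
    (h2 : lo ^ V ≤ 3 ^ u * 65536 ^ V) : (lo : ℝ) ≤ 65536 * (n : ℝ) ^ th := by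
  have h1' : (2 : ℝ) ^ u ≤ (n : ℝ) ^ V := by exact_mod_cast h1
  have h2' : (lo : ℝ) ^ V ≤ (3 : ℝ) ^ u * 65536 ^ V := by exact_mod_cast h2
  have h3 : (3 : ℝ) ^ u ≤ ((n : ℝ) ^ th) ^ V := by
    rw [← pow_rpow_th _ (by positivity), ← two_rpow_th, ← pow_rpow_th _ (by norm_num)]
    exact Real.rpow_le_rpow (by positivity) h1' th_pos.le
  have h4 : (lo : ℝ) ^ V ≤ (65536 * (n : ℝ) ^ th) ^ V := by
    rw [mul_pow, mul_comm]
    exact h2'.trans (mul_le_mul_of_nonneg_right h3 (pow_nonneg (by norm_num) _))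
  exact le_of_pow_le_pow_left₀ hV (by positivity) h4

theorem certH_aux {hi u n V : ℕ} (hV : V ≠ 0) (h1 : n ^ V ≤ 2 ^ u)
    (h2 : 3 ^ u * 65536 ^ V ≤ hi ^ V) : 65536 * (n : ℝ) ^ th ≤ (hi : ℝ) := by
  have h1' : (n : ℝ) ^ V ≤ (2 : ℝ) ^ u := by exact_mod_cast h1
  have h2' : (3 : ℝ) ^ u * 65536 ^ V ≤ (hi : ℝ) ^ V := by exact_mod_cast h2
  have h3 : ((n : ℝ) ^ th) ^ V ≤ (3 : ℝ) ^ u := by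
    rw [← pow_rpow_th _ (by positivity), ← two_rpow_th, ← pow_rpow_th _ (by norm_num)]
    exact Real.rpow_le_rpow (by positivity) h1' th_pos.le
  have h4 : (65536 * (n : ℝ) ^ th) ^ V ≤ (hi : ℝ) ^ V := by
    rw [mul_pow, mul_comm]
    exact le_trans (mul_le_mul_of_nonneg_right h3 (pow_nonneg (by norm_num) _)) h2'
  exact le_of_pow_le_pow_left₀ hV (by positivity) h4

theorem certL_sound {lo u n : ℕ} (h : certL lo u n = true) :
    (lo : ℝ) ≤ 65536 * (n : ℝ) ^ th := by
  unfold certL at h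
  rw [Bool.and_eq_true] at h
  exact certL_aux (V := 4096) (by norm_num) (Nat.le_of_ble_eq_true h.1) (Nat.le_of_ble_eq_true h.2)

theorem certH_sound {hi u n : ℕ} (h : certH hi u n = true) :
    65536 * (n : ℝ) ^ th ≤ (hi : ℝ) := by
  unfold certH at h
  rw [Bool.and_eq_true] at h
  exact certH_aux (V := 4096) (by norm_num) (Nat.le_of_ble_eq_true h.1) (Nat.le_of_ble_eq_true h.2)

theorem om_succ (k : ℕ) (ps : List ℕ) (n acc : ℕ) :
    om (k + 1) ps n acc = omStep (om k) ps n acc := rfl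

theorem om_sound (k : ℕ) : ∀ (ps : List ℕ) (n acc : ℕ), n ≠ 0 → n < 36481 →
    (191 ∈ ps) → ps.Pairwise (· < ·) → (∀ p ∈ ps, p.Prime) →
    (∀ q, q.Prime → q ∣ n → q ∈ ps ∨ 191 ≤ q) →
    ps.length + cardFactors n ≤ k → om k ps n acc = acc + cardFactors n := by
  induction k with
  | zero =>
    intro ps n acc _ _ h191 _ _ _ hk
    cases ps with
    | nil => simp at h191
    | cons p t => simp at hk
  | succ k ih =>
    intro ps n acc hn hn2 h191 hs hp hq hk
    rw [om_succ]
    cases ps with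
    | nil => simp at h191
    | cons p t =>
      have hpp : p.Prime := hp p (by simp)
      have hle : ∀ q, q.Prime → q ∣ n → p ≤ q := by
        intro q hq1 hq2
        have h191' : p ≤ 191 := by
          rcases List.mem_cons.1 h191 with h | h
          · exact h.symm.le
          · exact (List.rel_of_pairwise_cons hs h).le
        rcases hq q hq1 hq2 with h | h
        · rcases List.mem_cons.1 h with h | h
          · exact h.symm.le
          · exact (List.rel_of_pairwise_cons hs h).le
        · omega
      simp only [omStep, force_eq]
      by_cases hb : p * p ≤ n
      · have hb' : Nat.ble (Nat.mul p p) n = true := by simpa [Nat.ble_eq] using hb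
        rw [hb', cond_true]
        have hmod : Nat.mod n p = n % p := rfl
        have hdiv : Nat.div n p = n / p := rfl
        rw [hmod, hdiv]
        rcases Nat.eq_zero_or_pos (n % p) with h0 | h0
        · rw [h0]
          obtain ⟨m, rfl⟩ := Nat.dvd_of_mod_eq_zero h0
          have hm : m ≠ 0 := by rintro rfl; simp at hn
          have hO : cardFactors (p * m) = 1 + cardFactors m := by
            rw [cardFactors_mul hpp.ne_zero hm, cardFactors_apply_prime hpp]
          rw [Nat.mul_div_cancel_left _ hpp.pos]
          show om k (p :: t) m (Nat.succ acc) = _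
          rw [ih (p :: t) m _ hm (lt_of_le_of_lt (Nat.le_mul_of_pos_left _ hpp.pos) hn2) h191 hs hp
            (fun q h1 h2 => hq q h1 (h2.mul_left _)) (by omega), hO]
          omega
        · obtain ⟨r, hr⟩ := Nat.exists_eq_succ_of_ne_zero h0.ne'
          rw [hr]
          show om k t n acc = _
          have hnd : ¬ p ∣ n := fun h => by have := Nat.mod_eq_zero_of_dvd h; omega
          refine ih t n acc hn hn2 ?_ (List.Pairwise.of_cons hs) (fun q h => hp q (by simp [h])) ?_ ?_
          · rcases List.mem_cons.1 h191 with h | h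
            · exfalso; subst h; omega
            · exact h
          · intro q h1 h2
            rcases hq q h1 h2 with h | h
            · rcases List.mem_cons.1 h with h | h
              · exact absurd (h ▸ h2) hnd
              · exact Or.inl h
            · exact Or.inr h
          · simp only [List.length_cons] at hk; omega
      · have hb' : Nat.ble (Nat.mul p p) n = false := by
          rw [Bool.eq_false_iff]; intro h; exact hb (by simpa [Nat.ble_eq] using h)
        rw [hb', cond_false]
        rcases Nat.lt_or_ge 1 n with h1 | h1
        · have : Nat.ble n 1 = false := by
            rw [Bool.eq_false_iff]; intro h; simp [Nat.ble_eq] at h; omega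
          rw [this, cond_false]
          have hpr : n.Prime := by
            by_contra hc
            have h2 := Nat.minFac_sq_le_self (by omega) hc
            have h3 := hle _ (Nat.minFac_prime (by omega)) (Nat.minFac_dvd n)
            nlinarith
          rw [cardFactors_apply_prime hpr]
        · have : n = 1 := by omega
          subst this
          rw [cardFactors_one]
          rfl

theorem plist_prime : ∀ p ∈ plist, p.Prime := by
  intro p hp
  simp only [plist, List.mem_cons, List.not_mem_nil, or_false] at hp
  rcases hp with h|h|h|h|h|h|h|h|h|h|h|h|h|h|h|h|h|h|h|h|h|h|h|h|h|h|h|h|h|h|h|h|h|h|h|h|h|h|h|h|h|h|h <;>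
    subst h <;> norm_num

theorem plist_complete (q : ℕ) (hq : q.Prime) : q ∈ plist ∨ 191 ≤ q := by
  by_cases h : 191 ≤ q
  · exact Or.inr h
  · left
    push Not at h
    by_contra hc
    interval_cases q <;> first | (apply hc; simp [plist]; done) | (revert hq; norm_num; done)

theorem om_eq {n : ℕ} (h0 : n ≠ 0) (h : n < 36481) : om 60 plist n 0 = cardFactors n := by
  have h1 := om_sound 60 plist n 0 h0 h (by decide +kernel) (by decide +kernel) plist_prime
    (fun q hq _ => plist_complete q hq) ?_
  · rw [h1, zero_add]
  · have h2 : 2 ^ cardFactors n ≤ n := by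
      have : ∀ l : List ℕ, (∀ p ∈ l, 2 ≤ p) → 2 ^ l.length ≤ l.prod := by
        intro l
        induction l with
        | nil => simp
        | cons a t ih =>
          intro h
          rw [List.length_cons, List.prod_cons, pow_succ, mul_comm]
          exact Nat.mul_le_mul (h a (by simp)) (ih fun p hp => h p (by simp [hp]))
      have h3 := this n.primeFactorsList (fun p hp => (Nat.prime_of_mem_primeFactorsList hp).two_le)
      rwa [Nat.prod_primeFactorsList h0, ← cardFactors_apply] at h3
    have h3 : cardFactors n < 16 := by
      by_contra hc
      push Not at hc
      have := Nat.pow_le_pow_right (n := 2) (by norm_num) hc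
      omega
    have : plist.length = 43 := rfl
    omega

/-- `3 ^ Ω(m) / m ^ θ` -/
noncomputable def ff (m : ℕ) : ℝ := 3 ^ cardFactors m / (m : ℝ) ^ th

noncomputable def Qs (n : ℕ) : ℝ :=
  ∑ m ∈ Finset.Ico 1 n, (if m % 2 = 1 then 3 else 4) * (-3 : ℝ) ^ cardFactors m

noncomputable def Rs (n : ℕ) : ℝ := ∑ m ∈ Finset.Ico 1 n, if m % 2 = 1 then ff m else 0

noncomputable def Ps (n : ℕ) : ℝ :=
  ∏ m ∈ Finset.Ico 1 n, if m % 2 = 1 ∧ m.Prime then (1 - ff m)⁻¹ else 1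

theorem Qs_succ {n : ℕ} (h : 1 ≤ n) : Qs (n + 1) =
    Qs n + (if n % 2 = 1 then 3 else 4) * (-3 : ℝ) ^ cardFactors n := by
  unfold Qs; rw [Finset.sum_Ico_succ_top h]

theorem Rs_succ {n : ℕ} (h : 1 ≤ n) : Rs (n + 1) = Rs n + if n % 2 = 1 then ff n else 0 := by
  unfold Rs; rw [Finset.sum_Ico_succ_top h]

theorem Ps_succ {n : ℕ} (h : 1 ≤ n) : Ps (n + 1) =
    Ps n * if n % 2 = 1 ∧ n.Prime then (1 - ff n)⁻¹ else 1 := by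
  unfold Ps; rw [Finset.prod_Ico_succ_top h]

structure Valid (n P M C E : ℕ) : Prop where
  pos : 1 ≤ n
  q : (P : ℝ) - M = Qs n
  c : (C : ℝ) ≤ sT * Rs n
  e : sT * Ps n ≤ (E : ℝ)

def Good (Fn n : ℕ) : Prop := |Qs (n + 1)| * 1000 ≤ 4 * Fn * (n : ℝ) ^ th

theorem nxt_sound {Fn lo n P M C E : ℕ} {ih : ℕ → ℕ → ℕ → ℕ → ℕ → Bool}
    (h : nxt Fn lo ih n P M C E = true) (hv : Valid (n + 1) P M C E)
    (hlo : (lo : ℝ) ≤ 65536 * (n : ℝ) ^ th) : Good Fn n ∧ ih (n + 1) P M C E = true := by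
  simp only [nxt, force_eq] at h
  rw [Bool.cond_eq_ite] at h
  split_ifs at h with hc
  rw [Bool.and_eq_true] at hc
  obtain ⟨h1, h2⟩ := hc
  have h1 : ((65536000 * P : ℕ) : ℝ) ≤ ((65536000 * M + 4 * Fn * lo : ℕ) : ℝ) :=
    Nat.cast_le.2 (Nat.le_of_ble_eq_true h1)
  have h2 : ((65536000 * M : ℕ) : ℝ) ≤ ((65536000 * P + 4 * Fn * lo : ℕ) : ℝ) :=
    Nat.cast_le.2 (Nat.le_of_ble_eq_true h2)
  push_cast at h1 h2
  refine ⟨?_, h⟩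
  unfold Good
  rw [← hv.q]
  have h3 : (4 * Fn : ℝ) * lo ≤ 4 * Fn * (65536 * (n : ℝ) ^ th) :=
    mul_le_mul_of_nonneg_left hlo (by positivity)
  have h4 : |(P : ℝ) - M| * 65536000 ≤ 4 * Fn * (65536 * (n : ℝ) ^ th) := by
    rcases abs_cases ((P : ℝ) - M) with ⟨h, _⟩ | ⟨h, _⟩ <;> rw [h] <;> linarith
  linarith

theorem c_step {n hi C : ℕ} (hn : 1 ≤ n) (ho : n % 2 = 1) (hC : (C : ℝ) ≤ sT * Rs n)
    (hhi : 65536 * (n : ℝ) ^ th ≤ hi) :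
    ((C + 3 ^ cardFactors n * (sS * sT) / hi : ℕ) : ℝ) ≤ sT * Rs (n + 1) := by
  rw [Rs_succ hn, if_pos ho, mul_add, Nat.cast_add]
  refine add_le_add hC (Nat.cast_div_le.trans ?_)
  have hnp : 0 < (n : ℝ) ^ th := Real.rpow_pos_of_pos (by exact_mod_cast hn) _
  unfold ff
  rw [div_le_iff₀ (by linarith), ← mul_div_assoc, div_mul_eq_mul_div, le_div_iff₀ hnp]
  push_cast
  have h3 : (0 : ℝ) < 3 ^ cardFactors n := by positivity
  nlinarith [mul_le_mul_of_nonneg_left hhi h3.le]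

theorem c_step' {n C : ℕ} (hn : 1 ≤ n) (ho : ¬ n % 2 = 1) (hC : (C : ℝ) ≤ sT * Rs n) :
    (C : ℝ) ≤ sT * Rs (n + 1) := by
  rw [Rs_succ hn, if_neg ho, add_zero]; exact hC

theorem e_step' {n E : ℕ} (hn : 1 ≤ n) (ho : ¬ (n % 2 = 1 ∧ n.Prime)) (hE : sT * Ps n ≤ (E : ℝ)) :
    sT * Ps (n + 1) ≤ (E : ℝ) := by
  rw [Ps_succ hn, if_neg ho, mul_one]; exact hE

theorem e_step {n E lo : ℕ} (hn : 1 ≤ n) (ho : n % 2 = 1 ∧ n.Prime) (hE : sT * Ps n ≤ (E : ℝ))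
    (hlo : (lo : ℝ) ≤ 65536 * (n : ℝ) ^ th) (h3 : 3 * sS + 1 ≤ lo) :
    sT * Ps (n + 1) ≤ ((E * lo / (lo - 3 * sS) + 1 : ℕ) : ℝ) := by
  rw [Ps_succ hn, if_pos ho, ← mul_assoc]
  have hnp : 0 < (n : ℝ) ^ th := Real.rpow_pos_of_pos (by exact_mod_cast hn) _
  have hl3 : (196608 : ℝ) + 1 ≤ lo := by exact_mod_cast h3
  have hf : ff n = 3 / (n : ℝ) ^ th := by
    unfold ff; rw [cardFactors_apply_prime ho.2, pow_one]
  have hfl : ff n ≤ 196608 / lo := by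
    rw [hf, div_le_div_iff₀ hnp (by linarith)]; linarith
  have h1 : (1 - ff n)⁻¹ ≤ lo / (lo - 196608) := by
    rw [← inv_div]
    apply inv_anti₀
    · apply div_pos <;> linarith
    · rw [sub_div, div_self (by linarith)]; linarith
  have h1' : 0 ≤ (1 - ff n)⁻¹ := by
    apply inv_nonneg.2
    have : (196608 : ℝ) / lo ≤ 1 := by rw [div_le_one (by linarith)]; linarith
    linarith
  calc sT * Ps n * (1 - ff n)⁻¹ ≤ E * (1 - ff n)⁻¹ := mul_le_mul_of_nonneg_right hE h1'
    _ ≤ E * (lo / (lo - 196608)) := mul_le_mul_of_nonneg_left h1 (by positivity)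
    _ = ((E * lo : ℕ) : ℝ) / ((lo - 3 * sS : ℕ) : ℝ) := by
        rw [Nat.cast_sub (by omega)]; push_cast; ring
    _ ≤ _ := (Nat.lt_floor_add_one _).le.trans (by
        rw [Nat.floor_div_natCast, Nat.floor_natCast]; push_cast; exact le_rfl)

theorem runStep_sound {Fn lo hi n P M C E : ℕ} {ih : ℕ → ℕ → ℕ → ℕ → ℕ → Bool}
    (h : runStep Fn lo hi ih n P M C E = true) (hv : Valid n P M C E) (hn : n < 36481)
    (hlo : (lo : ℝ) ≤ 65536 * (n : ℝ) ^ th) (hhi : 65536 * (n : ℝ) ^ th ≤ hi) :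
    Good Fn n ∧ ∃ P M C E, Valid (n + 1) P M C E ∧ ih (n + 1) P M C E = true := by
  have hn1 := hv.pos
  simp only [runStep, force_eq, om_eq (Nat.one_le_iff_ne_zero.1 hn1) hn, Nat.pow_eq] at h
  have hmod : Nat.mod n 2 = n % 2 := rfl
  have hmod' : Nat.mod (cardFactors n) 2 = cardFactors n % 2 := rfl
  simp only [hmod, hmod', Bool.cond_eq_ite, Nat.beq_eq, Nat.ble_eq] at h
  have hodd : cardFactors n % 2 = 1 → (-3 : ℝ) ^ cardFactors n = - 3 ^ cardFactors n :=
    fun h => (Nat.odd_iff.2 h).neg_pow 3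
  have heven : ¬ cardFactors n % 2 = 1 → (-3 : ℝ) ^ cardFactors n = 3 ^ cardFactors n :=
    fun h => (Nat.even_iff.2 (by omega)).neg_pow 3
  have fin : ∀ {P M C E}, Valid (n + 1) P M C E → nxt Fn lo ih n P M C E = true →
      Good Fn n ∧ ∃ P M C E, Valid (n + 1) P M C E ∧ ih (n + 1) P M C E = true :=
    fun hv h => ⟨(nxt_sound h hv hlo).1, _, _, _, _, hv, (nxt_sound h hv hlo).2⟩
  split_ifs at h with h1 h2 h3 h3 h3
  · have hp : n.Prime := cardFactors_eq_one_iff_prime.1 h2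
    refine fin ⟨by omega, ?_, c_step hn1 h1 hv.c hhi, e_step hn1 ⟨h1, hp⟩ hv.e hlo h3⟩ h
    rw [Qs_succ hn1, ← hv.q, if_pos h1, hodd (by rw [h2])]; push_cast; ring
  · have hp : ¬ n.Prime := fun hp => h2 (cardFactors_apply_prime hp)
    refine fin ⟨by omega, ?_, c_step hn1 h1 hv.c hhi, e_step' hn1 (fun h => hp h.2) hv.e⟩ h
    rw [Qs_succ hn1, ← hv.q, if_pos h1, hodd h3]; push_cast; ring
  · have hp : ¬ n.Prime := fun hp => h2 (cardFactors_apply_prime hp)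
    refine fin ⟨by omega, ?_, c_step hn1 h1 hv.c hhi, e_step' hn1 (fun h => hp h.2) hv.e⟩ h
    rw [Qs_succ hn1, ← hv.q, if_pos h1, heven h3]; push_cast; ring
  · refine fin ⟨by omega, ?_, c_step' hn1 h1 hv.c, e_step' hn1 (fun h => h1 h.1) hv.e⟩ h
    rw [Qs_succ hn1, ← hv.q, if_neg h1, hodd h3]; push_cast; ring
  · refine fin ⟨by omega, ?_, c_step' hn1 h1 hv.c, e_step' hn1 (fun h => h1 h.1) hv.e⟩ h
    rw [Qs_succ hn1, ← hv.q, if_neg h1, heven h3]; push_cast; ring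

theorem run_sound {Fn lo hi Pe Me Ce Ee : ℕ} (len : ℕ) : ∀ {n P M C E : ℕ},
    run Fn lo hi Pe Me Ce Ee len n P M C E = true → Valid n P M C E → n + len ≤ 36481 →
    (∀ m, n ≤ m → m < n + len → (lo : ℝ) ≤ 65536 * (m : ℝ) ^ th ∧ 65536 * (m : ℝ) ^ th ≤ hi) →
    Valid (n + len) Pe Me Ce Ee ∧ ∀ m, n ≤ m → m < n + len → Good Fn m := by
  induction len with
  | zero =>
    intro n P M C E h hv _ _
    replace h : (Nat.beq P Pe && Nat.beq M Me && Nat.beq C Ce && Nat.beq E Ee) = true := h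
    simp only [Bool.and_eq_true, Nat.beq_eq] at h
    obtain ⟨⟨⟨rfl, rfl⟩, rfl⟩, rfl⟩ := h
    exact ⟨hv, fun m h1 h2 => by omega⟩
  | succ k ih =>
    intro n P M C E h hv hn hb
    have h' : runStep Fn lo hi (run Fn lo hi Pe Me Ce Ee k) n P M C E = true := h
    obtain ⟨hg, P', M', C', E', hv', hr⟩ := runStep_sound h' hv (by omega)
      (hb n le_rfl (by omega)).1 (hb n le_rfl (by omega)).2
    obtain ⟨h1, h2⟩ := ih hr hv' (by omega) (fun m h1 h2 => hb m (by omega) (by omega))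
    refine ⟨by rw [show n + (k + 1) = n + 1 + k by omega]; exact h1, fun m h3 h4 => ?_⟩
    rcases Nat.eq_or_lt_of_le h3 with h5 | h5
    · exact h5 ▸ hg
    · exact h2 m h5 (by omega)

theorem chk_sound {Fn ne Pe Me Ce Ee : ℕ} (hne : ne ≤ 36481) (rows : List Row) :
    ∀ {n P M C E : ℕ},
    chk Fn ne Pe Me Ce Ee rows n P M C E = true → Valid n P M C E →
    n ≤ ne ∧ (Valid ne Pe Me Ce Ee ∧ ∀ m, n ≤ m → m < ne → Good Fn m) := by
  induction rows with
  | nil =>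
    intro n P M C E h hv
    simp only [chk, Bool.and_eq_true, Nat.beq_eq] at h
    obtain ⟨⟨⟨⟨rfl, rfl⟩, rfl⟩, rfl⟩, rfl⟩ := h
    exact ⟨le_rfl, hv, fun m h1 h2 => by omega⟩
  | cons r t ih =>
    intro n P M C E h hv
    have h' : (certL r.lo r.ul n && certH r.hi r.uh (n + r.len - 1) &&
      (run Fn r.lo r.hi r.P r.M r.C r.E r.len n P M C E &&
        force (n + r.len) fun n' => chk Fn ne Pe Me Ce Ee t n' r.P r.M r.C r.E)) = true := h
    rw [force_eq, Bool.and_eq_true, Bool.and_eq_true, Bool.and_eq_true] at h'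
    obtain ⟨⟨hl, hh⟩, hr, hc⟩ := h'
    have hl := certL_sound hl
    have hh := certH_sound hh
    -- first the bound on the length
    have key : ∀ (t : List Row) {n P M C E : ℕ},
        chk Fn ne Pe Me Ce Ee t n P M C E = true → n ≤ ne := by
      intro t
      induction t with
      | nil =>
        intro n P M C E h
        simp only [chk, Bool.and_eq_true, Nat.beq_eq] at h
        exact h.1.1.1.1.le
      | cons r t ih2 =>
        intro n P M C E h
        have h' : (certL r.lo r.ul n && certH r.hi r.uh (n + r.len - 1) &&
          (run Fn r.lo r.hi r.P r.M r.C r.E r.len n P M C E &&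
          force (n + r.len) fun n' => chk Fn ne Pe Me Ce Ee t n' r.P r.M r.C r.E)) = true := h
        rw [force_eq, Bool.and_eq_true, Bool.and_eq_true, Bool.and_eq_true] at h'
        have := ih2 h'.2.2
        omega
    have hle := key t hc
    obtain ⟨h1, h2⟩ := run_sound r.len hr hv (by omega) (fun m h1 h2 => by
      constructor
      · refine hl.trans (mul_le_mul_of_nonneg_left ?_ (by norm_num))
        exact Real.rpow_le_rpow (by positivity) (by exact_mod_cast h1) th_pos.le
      · refine le_trans (mul_le_mul_of_nonneg_left ?_ (by norm_num)) hh
        exact Real.rpow_le_rpow (by positivity) (Nat.cast_le.2 (by omega)) th_pos.le)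
    obtain ⟨h3, h4, h5⟩ := ih hc h1
    refine ⟨by omega, h4, fun m h6 h7 => ?_⟩
    rcases Nat.lt_or_ge m (n + r.len) with h8 | h8
    · exact h2 m h6 h8
    · exact h5 m h8 h7

theorem valid_one : Valid 1 0 0 0 1099511627776 :=
  ⟨le_rfl, by simp [Qs], by simp [Rs], by simp [Ps]⟩
def rows1 : List Row := [
  ⟨1, 0, 1, 65536, 65555, 3, 0, 1099192953061, 1099511627776⟩,
  ⟨1, 4096, 4097, 196608, 196664, 3, 12, 1099192953061, 1099511627776⟩,
  ⟨1, 6492, 6493, 373746, 373957, 3, 21, 1677261506701, 2319875310971⟩,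
  ⟨1, 8192, 8193, 589824, 589990, 39, 21, 1677261506701, 2319875310971⟩,
  ⟨1, 9510, 9511, 839845, 840317, 39, 30, 1934512975032, 3028954616328⟩,
  ⟨1, 10588, 10589, 1121239, 1121870, 75, 30, 1934512975032, 3028954616328⟩,
  ⟨1, 11498, 11499, 1431550, 1432355, 75, 39, 2085434207627, 3511177027751⟩,
  ⟨1, 12288, 12289, 1769472, 1769969, 75, 147, 2085434207627, 3511177027751⟩,
  ⟨1, 12984, 12985, 2132046, 2133244, 102, 147, 2389439912713, 3511177027751⟩,
  ⟨1, 13606, 13607, 2519535, 2520951, 138, 147, 2389439912713, 3511177027751⟩,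
  ⟨1, 14169, 14170, 2930396, 2932043, 138, 156, 2463167611151, 3763693131075⟩,
  ⟨1, 14684, 14685, 3363719, 3365609, 138, 264, 2463167611151, 3763693131075⟩,
  ⟨1, 15157, 15158, 3818707, 3820853, 138, 273, 2519744711111, 3967986878738⟩,
  ⟨1, 15594, 15595, 4294651, 4297064, 174, 273, 2519744711111, 3967986878738⟩,
  ⟨1, 16002, 16003, 4790915, 4793607, 201, 273, 2655032886871, 3967986878738⟩,
  ⟨1, 16384, 16385, 5308416, 5309907, 525, 273, 2655032886871, 3967986878738⟩,
  ⟨1, 16742, 16743, 5842159, 5845441, 525, 282, 2692014319429, 4106173207098⟩,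
  ⟨1, 17080, 17081, 6396138, 6399731, 525, 390, 2692014319429, 4106173207098⟩,
  ⟨1, 17399, 17400, 6968422, 6972337, 525, 399, 2723018670210, 4225388900545⟩,
  ⟨1, 17702, 17703, 7558606, 7562853, 525, 507, 2723018670210, 4225388900545⟩,
  ⟨1, 17990, 17991, 8166312, 8170900, 552, 507, 2802387937529, 4225388900545⟩,
  ⟨1, 18265, 18266, 8791188, 8796127, 588, 507, 2802387937529, 4225388900545⟩,
  ⟨1, 18528, 18529, 9432906, 9438205, 588, 516, 2825291951810, 4315332432138⟩,
  ⟨1, 18780, 18781, 10091158, 10096827, 912, 516, 2825291951810, 4315332432138⟩,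
  ⟨1, 19021, 19022, 10765655, 10771703, 939, 516, 2885497691454, 4315332432138⟩,
  ⟨1, 19253, 19254, 11456123, 11462558, 975, 516, 2885497691454, 4315332432138⟩,
  ⟨1, 19476, 19477, 12162304, 12169136, 975, 597, 3045373876503, 4315332432138⟩,
  ⟨1, 19690, 19691, 12883954, 12891192, 975, 705, 3045373876503, 4315332432138⟩,
  ⟨1, 19898, 19899, 13620842, 13628493, 975, 714, 3061235702319, 4378533720109⟩,
  ⟨1, 20098, 20099, 14372746, 14380820, 975, 822, 3061235702319, 4378533720109⟩,
  ⟨1, 20292, 20293, 15139458, 15147962, 975, 831, 3075506452543, 4436143530664⟩,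
  ⟨1, 20480, 20481, 15925248, 15929720, 975, 1803, 3075506452543, 4436143530664⟩,
  ⟨1, 20661, 20662, 16716510, 16725901, 1002, 1803, 3114279750695, 4436143530664⟩,
  ⟨1, 20838, 20839, 17526477, 17536322, 1038, 1803, 3114279750695, 4436143530664⟩,
  ⟨1, 21009, 21010, 18350501, 18360809, 1065, 1803, 3149600544367, 4436143530664⟩,
  ⟨1, 21176, 21177, 19188414, 19199192, 1389, 1803, 3149600544367, 4436143530664⟩,
  ⟨1, 21337, 21338, 20040054, 20051311, 1389, 1812, 3160381524329, 4480096647844⟩,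
  ⟨1, 21495, 21496, 20905268, 20917011, 1425, 1812, 3160381524329, 4480096647844⟩,
  ⟨1, 21649, 21650, 21783904, 21796140, 1452, 1812, 3190135340662, 4480096647844⟩,
  ⟨1, 21798, 21799, 22675819, 22688557, 1776, 1812, 3190135340662, 4480096647844⟩,
  ⟨1, 21944, 21945, 23580874, 23594120, 1776, 1821, 3199297487082, 4517763976883⟩,
  ⟨1, 22086, 22087, 24498936, 24512698, 1776, 1929, 3199297487082, 4517763976883⟩,
  ⟨1, 22225, 22226, 25429875, 25444159, 1776, 1938, 3207793455925, 4552964672060⟩,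
  ⟨1, 22361, 22362, 26373565, 26388379, 1776, 2046, 3207793455925, 4552964672060⟩,
  ⟨1, 22494, 22495, 27329886, 27345237, 1776, 2127, 3278941313923, 4552964672060⟩,
  ⟨1, 22624, 22625, 28298719, 28314615, 1812, 2127, 3278941313923, 4552964672060⟩,
  ⟨1, 22751, 22752, 29279953, 29296400, 1812, 2136, 3286320131187, 4583743431459⟩,
  ⟨1, 22876, 22877, 30273476, 30290481, 1812, 3108, 3286320131187, 4583743431459⟩,
  ⟨1, 22997, 22998, 31279181, 31296751, 1839, 3108, 3307041718112, 4583743431459⟩,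
  ⟨1, 23117, 23118, 32296966, 32315107, 1839, 3216, 3307041718112, 4583743431459⟩,
  ⟨1, 23234, 23235, 33326727, 33345447, 1866, 3216, 3326490200729, 4583743431459⟩,
  ⟨1, 23349, 23350, 34368369, 34387674, 1866, 3324, 3326490200729, 4583743431459⟩,
  ⟨1, 23461, 23462, 35421795, 35441692, 1866, 3333, 3332589592995, 4609327415686⟩,
  ⟨1, 23572, 23573, 36486913, 36507408, 2190, 3333, 3332589592995, 4609327415686⟩,
  ⟨1, 23680, 23681, 37563632, 37584732, 2217, 3333, 3349844427919, 4609327415686⟩,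
  ⟨1, 23786, 23787, 38651864, 38673575, 2541, 3333, 3349844427919, 4609327415686⟩,
  ⟨1, 23891, 23892, 39751523, 39773852, 2568, 3333, 3366149570964, 4609327415686⟩,
  ⟨1, 23994, 23995, 40862527, 40885479, 2604, 3333, 3366149570964, 4609327415686⟩,
  ⟨1, 24095, 24096, 41984792, 42008375, 2604, 3342, 3371295515840, 4631013704915⟩,
  ⟨1, 24194, 24195, 43118240, 43142460, 2928, 3342, 3371295515840, 4631013704915⟩,
  ⟨1, 24292, 24293, 44262793, 44287656, 2928, 3351, 3376176622713, 4651675678320⟩,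
  ⟨1, 24388, 24389, 45418375, 45443886, 2964, 3351, 3376176622713, 4651675678320⟩,
  ⟨1, 24482, 24483, 46584911, 46611078, 2964, 3432, 3417916808147, 4651675678320⟩,
  ⟨2, 24576, 24668, 47775744, 48978055, 5907, 3432, 3431157806515, 4651675678320⟩,
  ⟨2, 24757, 24847, 50149532, 51388026, 5907, 3549, 3435364482640, 4669984049053⟩,
  ⟨2, 24934, 25021, 52579431, 53840453, 5934, 3657, 3447409670044, 4669984049053⟩,
  ⟨2, 25105, 25190, 55051503, 56334820, 5934, 3774, 3451246955440, 4686721957747⟩,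
  ⟨2, 25272, 25354, 57565242, 58870634, 5934, 4755, 3454918952281, 4702783818845⟩,
  ⟨2, 25433, 25514, 60120164, 61447418, 5970, 4836, 3486581064414, 4702783818845⟩,
  ⟨2, 25591, 25669, 62715804, 64064716, 5997, 4944, 3496703927463, 4702783818845⟩,
  ⟨2, 25745, 25821, 65351712, 66722088, 5997, 5061, 3499943825802, 4716974647565⟩,
  ⟨2, 25894, 25969, 68027458, 69419109, 6240, 6033, 3584022477936, 4716974647565⟩,
  ⟨2, 26040, 26113, 70742624, 72155371, 6276, 6042, 3587018412668, 4730120605397⟩,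
  ⟨2, 26182, 26253, 73496809, 74930477, 6627, 6042, 3595673346845, 4730120605397⟩,
  ⟨2, 26321, 26391, 76289625, 77744045, 6690, 6042, 3604015057728, 4730120605397⟩,
  ⟨2, 26457, 26525, 79120695, 80595707, 7014, 6051, 3606697245032, 4741903821236⟩,
  ⟨2, 26590, 26656, 81989658, 83485104, 7365, 6051, 3614465317601, 4741903821236⟩,
  ⟨2, 26720, 26785, 84896159, 86411890, 7392, 6159, 3621970284178, 4741903821236⟩,
  ⟨2, 26847, 26911, 87839860, 89375730, 7455, 6159, 3629226374241, 4741903821236⟩,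
  ⟨2, 26972, 27034, 90820429, 92376296, 10371, 6168, 3631566506845, 4752191361711⟩,
  ⟨2, 27093, 27154, 93837545, 95413274, 10371, 6357, 3651957328346, 4752191361711⟩,
  ⟨2, 27213, 27273, 96890898, 98486355, 10695, 6366, 3654152279942, 4761853967841⟩,
  ⟨2, 27330, 27388, 99980183, 101595242, 10695, 6483, 3656280064450, 4771236459749⟩,
  ⟨2, 27445, 27502, 103105109, 104739644, 11019, 6564, 3674855218658, 4771236459749⟩,
  ⟨2, 27557, 27614, 106265387, 107919279, 11055, 6573, 3676858315640, 4780080374676⟩,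
  ⟨2, 27668, 27723, 109460740, 111133872, 11055, 7554, 3678803472217, 4788681569095⟩,
  ⟨2, 27776, 27830, 112690896, 114383155, 11082, 7662, 3684473173724, 4788681569095⟩,
  ⟨2, 27882, 27936, 115955593, 117666868, 11082, 8643, 3686310333034, 4796814787488⟩,
  ⟨2, 27987, 28040, 119254571, 120984755, 11109, 8751, 3691670664146, 4796814787488⟩,
  ⟨2, 28090, 28142, 122587581, 124336570, 11109, 8940, 3707318152564, 4796814787488⟩,
  ⟨2, 28191, 28242, 125954378, 127722071, 11172, 8940, 3712395727185, 4796814787488⟩,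
  ⟨2, 28290, 28340, 129354722, 131141020, 11199, 9912, 3717340925463, 4796814787488⟩,
  ⟨2, 28388, 28437, 132788380, 134593188, 11262, 9912, 3722159284816, 4796814787488⟩,
  ⟨2, 28484, 28532, 136255125, 138078349, 11262, 10101, 3736249510062, 4796814787488⟩,
  ⟨2, 28578, 28626, 139754735, 141596284, 11586, 10110, 3737776194068, 4803572488971⟩,
  ⟨4, 28672, 28809, 143327232, 148729616, 11613, 18975, 3743590040372, 4810170802830⟩,
  ⟨4, 28853, 28987, 150448596, 155991518, 12243, 18975, 3785163989689, 4810170802830⟩,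
  ⟨4, 29030, 29160, 157738295, 163380396, 12567, 19101, 3787810240859, 4822184234897⟩,
  ⟨4, 29201, 29327, 165154510, 170894720, 12981, 19101, 3795399923515, 4822184234897⟩,
  ⟨4, 29368, 29490, 172695727, 178533020, 15960, 19182, 3809929859687, 4822184234897⟩,
  ⟨4, 29529, 29649, 180360493, 186293885, 16284, 19308, 3812250631321, 4832714617335⟩,
  ⟨4, 29687, 29804, 188147412, 194175957, 16635, 19497, 3825610026713, 4832714617335⟩,
  ⟨4, 29841, 29954, 196055137, 202177927, 17022, 19506, 3829886908671, 4837565824788⟩,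
  ⟨4, 29990, 30101, 204082375, 210298534, 19965, 20487, 3833998640273, 4842230712170⟩,
  ⟨4, 30136, 30244, 212227874, 218536561, 20001, 20685, 3843890476270, 4846720716469⟩,
  ⟨4, 30278, 30384, 220490429, 226890832, 20028, 21846, 3855323610708, 4846720716469⟩,
  ⟨4, 30417, 30521, 228868876, 235360210, 20028, 22152, 3864508374015, 4850887833344⟩,
  ⟨4, 30553, 30654, 237362087, 243943596, 20091, 23133, 3868053009507, 4854909174727⟩,
  ⟨4, 30686, 30785, 245968974, 252639925, 20118, 24222, 3871475632152, 4858792906648⟩,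
  ⟨4, 30816, 30913, 254688479, 261448167, 20496, 24330, 3876436602838, 4858792906648⟩,
  ⟨4, 30943, 31038, 263519581, 270367321, 20739, 24555, 3898824064002, 4862420685664⟩,
  ⟨4, 31068, 31160, 272461288, 279396417, 20775, 33393, 3906561199088, 4865931940985⟩,
  ⟨4, 31189, 31280, 281512637, 288534513, 21423, 33411, 3908059617976, 4872735786869⟩,
  ⟨4, 31309, 31398, 290672694, 297780694, 21513, 34383, 3912415295556, 4872735786869⟩,
  ⟨4, 31426, 31513, 299940551, 307134072, 21900, 34464, 3920861357461, 4872735786869⟩,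
  ⟨4, 31541, 31626, 309315327, 316593781, 22251, 35445, 3923592589658, 4875834980735⟩,
  ⟨4, 31653, 31737, 318796161, 326158981, 22341, 35553, 3927569290494, 4875834980735⟩,
  ⟨4, 31764, 31846, 328382220, 335828852, 25347, 35553, 3931431486028, 4875834980735⟩,
  ⟨4, 31872, 31953, 338072690, 345602596, 25698, 35670, 3933933467026, 4878672198920⟩,
  ⟨4, 31978, 32058, 347866779, 355479435, 28893, 35679, 3950960718965, 4881431095322⟩,
  ⟨4, 32083, 32161, 357763715, 365458613, 29217, 35877, 3956875828758, 4884115146473⟩,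
  ⟨4, 32186, 32263, 367762744, 375539389, 29892, 35886, 3959178359872, 4886727618126⟩,
  ⟨4, 32287, 32362, 377863134, 385721043, 29919, 36111, 3961420112413, 4889271581325⟩,
  ⟨4, 32386, 32461, 388064166, 396002869, 32835, 36957, 4006182838951, 4891749927058⟩,
  ⟨4, 32484, 32557, 398365142, 406384181, 32862, 37254, 4012566142008, 4891749927058⟩,
  ⟨4, 32580, 32652, 408765377, 416864306, 33537, 37263, 4014640416816, 4894103893496⟩,
  ⟨4, 32674, 32745, 419264205, 427442587, 33600, 38316, 4020709239773, 4894103893496⟩,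
  ⟨8, 32768, 32928, 429981696, 448891066, 60231, 38523, 4027451229484, 4898582597352⟩,
  ⟨8, 32949, 33105, 451345790, 470724647, 60285, 40701, 4031125101814, 4902853071166⟩,
  ⟨8, 33126, 33277, 473214886, 492938570, 60681, 41925, 4043404193502, 4904890920826⟩,
  ⟨8, 33297, 33444, 495463530, 515528269, 60708, 43320, 4049274713376, 4908785920313⟩,
  ⟨8, 33464, 33606, 518087182, 538489359, 61113, 52293, 4053289143342, 4910649454100⟩,
  ⟨8, 33625, 33765, 541081481, 561817627, 61833, 53265, 4067141005195, 4910649454100⟩,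
  ⟨8, 33783, 33919, 564442236, 585509016, 62535, 54363, 4070094644181, 4914072222933⟩,
  ⟨8, 33937, 34069, 588165413, 609559620, 62841, 55569, 4081443048504, 4917359157328⟩,
  ⟨8, 34086, 34215, 612247125, 633965671, 65874, 64506, 4087580778439, 4917359157328⟩,
  ⟨8, 34232, 34358, 636683623, 658723533, 66612, 64704, 4092831485815, 4918878107639⟩,
  ⟨8, 34374, 34497, 661471289, 683829695, 70230, 64902, 4097889418423, 4920340572202⟩,
  ⟨8, 34513, 34634, 686606629, 709280760, 71481, 65001, 4109470961562, 4923159636122⟩,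
  ⟨8, 34649, 34767, 712086263, 735073445, 74460, 65316, 4113588126954, 4925879344785⟩,
  ⟨8, 34782, 34897, 737906922, 761204568, 77790, 65514, 4118131931153, 4927192146393⟩,
  ⟨8, 34912, 35024, 764065438, 787671047, 78384, 66792, 4129109751545, 4928460329301⟩,
  ⟨8, 35039, 35149, 790558744, 814469894, 79122, 67782, 4131233074049, 4930912610868⟩,
  ⟨8, 35164, 35271, 817383864, 841598209, 105753, 68061, 4136883990547, 4932098944673⟩,
  ⟨8, 35285, 35391, 844537911, 869053178, 105879, 70095, 4140863913294, 4933247402182⟩,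
  ⟨8, 35405, 35508, 872018083, 896832066, 108849, 71157, 4162075470670, 4934359918831⟩,
  ⟨8, 35522, 35623, 899821655, 924932214, 109254, 72354, 4164412644990, 4935438295471⟩,
  ⟨8, 35637, 35736, 927945981, 953351037, 112233, 73533, 4167587151368, 4937530346403⟩,
  ⟨8, 35749, 35847, 956388485, 982086021, 112584, 74028, 4172429701923, 4938545579841⟩,
  ⟨8, 35860, 35956, 985146662, 1011134715, 112611, 83199, 4175422793648, 4940517364041⟩,
  ⟨8, 35968, 36062, 1014218072, 1040494734, 113268, 84288, 4182486620450, 4941475277924⟩,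
  ⟨8, 36074, 36167, 1043600338, 1070163753, 113358, 94206, 4185718616023, 4942406397436⟩,
  ⟨8, 36179, 36270, 1073291145, 1100139506, 114285, 95205, 4191613489741, 4945123477756⟩,
  ⟨8, 36282, 36371, 1103288234, 1130419781, 114375, 97347, 4194673206644, 4946004864954⟩,
  ⟨8, 36383, 36471, 1133589402, 1161002420, 115086, 97626, 4198769495438, 4946862841227⟩,
  ⟨8, 36482, 36569, 1164192499, 1191885318, 118416, 106464, 4201671422712, 4947698405010⟩,
  ⟨8, 36580, 36665, 1195095426, 1223066417, 119685, 106581, 4207680805757, 4948512496608⟩,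
  ⟨8, 36676, 36760, 1226296133, 1254543707, 119775, 108651, 4209059300777, 4950099635548⟩,
  ⟨8, 36770, 36853, 1257792617, 1286315224, 123069, 108957, 4211748194174, 4950873516176⟩,
  ⟨16, 36864, 37035, 1289945088, 1350733298, 124383, 188895, 4222630985916, 4952383043881⟩,
  ⟨16, 37045, 37212, 1354037370, 1416305768, 131070, 189282, 4227820454710, 4953102240816⟩,
  ⟨16, 37222, 37383, 1419644660, 1483018390, 135102, 190650, 4232484947790, 4954474445972⟩,
  ⟨16, 37393, 37550, 1486390592, 1550857502, 139440, 191676, 4247538981080, 4956440982355⟩,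
  ⟨16, 37560, 37712, 1554261547, 1619809984, 166746, 192990, 4253411029346, 4957695161079⟩,
  ⟨16, 37721, 37870, 1623244445, 1689863224, 169689, 195753, 4257760419566, 4960097800441⟩,
  ⟨16, 37879, 38024, 1693326710, 1761005083, 173298, 198102, 4264389208057, 4961825915994⟩,
  ⟨16, 38033, 38174, 1764496240, 1833223867, 177258, 199542, 4271936053972, 4962378846263⟩,
  ⟨16, 38182, 38320, 1836741375, 1906508300, 204204, 208920, 4275110883002, 4964504141717⟩,
  ⟨16, 38328, 38463, 1910050869, 1980847498, 204969, 211449, 4279257878526, 4965526325966⟩,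
  ⟨16, 38470, 38602, 1984413869, 2056230948, 205761, 223113, 4289350415599, 4967002513514⟩,
  ⟨16, 38609, 38738, 2059819889, 2132648484, 206535, 227127, 4293810410985, 4967950841347⟩,
  ⟨16, 38745, 38871, 2136258791, 2210090271, 207660, 236352, 4297527257225, 4968865406324⟩,
  ⟨16, 38878, 39001, 2213720766, 2288546787, 210855, 246495, 4324920233045, 4969748127276⟩,
  ⟨16, 39008, 39128, 2292196315, 2368008803, 214860, 248736, 4327658898309, 4971027153694⟩,
  ⟨16, 39135, 39253, 2371676233, 2448467372, 218199, 251103, 4332073349249, 4971851435894⟩,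
  ⟨16, 39260, 39375, 2452151593, 2529913810, 219531, 331203, 4336858364349, 4972648795523⟩,
  ⟨16, 39381, 39494, 2533613735, 2612339689, 225858, 331734, 4339009880997, 4973420638787⟩,
  ⟨16, 39501, 39612, 2616054249, 2695736819, 229890, 340878, 4341575980539, 4974168272004⟩,
  ⟨16, 39618, 39726, 2699464966, 2780097240, 234030, 342210, 4346552446053, 4975617654579⟩,
  ⟨16, 39733, 39839, 2783837943, 2865413210, 237990, 351426, 4351380740274, 4975969081404⟩,
  ⟨16, 39845, 39950, 2869165455, 2951677194, 239943, 352623, 4354749654727, 4977333217374⟩,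
  ⟨16, 39956, 40058, 2955439986, 3038881858, 267906, 352902, 4358875521390, 4977664352041⟩,
  ⟨16, 40064, 40165, 3042654216, 3127020055, 271263, 356007, 4365926842899, 4978629405958⟩,
  ⟨16, 40170, 40270, 3130801016, 3216084823, 301188, 356592, 4368481055915, 4979254760670⟩,
  ⟨16, 40275, 40372, 3219873437, 3306069371, 304320, 359868, 4371096521688, 4979558816441⟩,
  ⟨16, 40378, 40474, 3309864703, 3396967077, 310917, 360381, 4373005631579, 4980446288446⟩,
  ⟨16, 40479, 40573, 3400768207, 3488771478, 312033, 363369, 4379449724999, 4981022205678⟩,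
  ⟨16, 40578, 40671, 3492577497, 3581476264, 338961, 373593, 4382829804855, 4981583047358⟩,
  ⟨16, 40676, 40767, 3585286278, 3675075272, 339402, 377886, 4384594444477, 4982402669364⟩,
  ⟨16, 40772, 40862, 3678888399, 3769562481, 345981, 378381, 4387920565587, 4982668954305⟩,
  ⟨16, 40866, 40955, 3773377852, 3864932007, 347016, 388596, 4389822248351, 4983707557104⟩,
  ⟨32, 40960, 41137, 3869835264, 4058295118, 587496, 394068, 4399197221956, 4984973742963⟩,
  ⟨32, 41141, 41313, 4062112110, 4255120054, 589260, 414624, 4403667884253, 4985938959378⟩,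
  ⟨32, 41318, 41485, 4258933980, 4455364140, 594165, 427125, 4408616890226, 4987320197828⟩,
  ⟨32, 41489, 41651, 4459171777, 4658986442, 598404, 441192, 4415019966142, 4987979939304⟩,
  ⟨32, 41656, 41813, 4662784641, 4865947651, 603012, 523848, 4419995636516, 4988821307904⟩,
  ⟨32, 41817, 41971, 4869733335, 5076209972, 614226, 532902, 4433452644690, 4989627053207⟩,
  ⟨32, 41975, 42125, 5079980131, 5289737035, 621840, 544476, 4437212358221, 4990592720872⟩,
  ⟨32, 42129, 42274, 5293488722, 5506493798, 627114, 556878, 4441138137301, 4991334221702⟩,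
  ⟨32, 42278, 42421, 5510224126, 5726446469, 656013, 638157, 4445139626705, 4992581055597⟩,
  ⟨32, 42424, 42563, 5730152608, 5949562434, 664077, 641613, 4450371756117, 4993094994129⟩,
  ⟨32, 42566, 42702, 5953241608, 6175810184, 700554, 644286, 4453942076948, 4993589723219⟩,
  ⟨32, 42705, 42838, 6179459668, 6405159257, 713154, 647814, 4459072045079, 4993907494222⟩,
  ⟨32, 42841, 42971, 6408776375, 6637580179, 741684, 651648, 4462589390227, 4994826809432⟩,
  ⟨32, 42974, 43101, 6641162300, 6873044407, 772590, 664194, 4465482998176, 4995566220767⟩,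
  ⟨32, 43104, 43228, 6876588946, 7111524284, 779610, 677478, 4469860242675, 4996423273517⟩,
  ⟨32, 43231, 43353, 7115028699, 7352992992, 787242, 688278, 4472682574621, 4996837491558⟩,
  ⟨32, 43356, 43475, 7356454780, 7597424508, 1027884, 693696, 4476666054734, 4997505270422⟩,
  ⟨32, 43477, 43594, 7600841206, 7844793568, 1029954, 713982, 4481405722916, 4998022377954⟩,
  ⟨32, 43597, 43711, 7848162749, 8095075625, 1058133, 726573, 4484236371561, 4998898920383⟩,
  ⟨32, 43714, 43826, 8098394899, 8348246819, 1062624, 739884, 4486566866901, 4999263018921⟩,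
  ⟨32, 43829, 43939, 8351513829, 8604283944, 1091226, 752358, 4489280243225, 4999616107501⟩,
  ⟨32, 43941, 44049, 8607496366, 8863164415, 1097769, 758721, 4497524070922, 5000187139917⟩,
  ⟨32, 44052, 44158, 8866319959, 9124866246, 1098939, 844059, 4500840743038, 5000741565092⟩,
  ⟨32, 44160, 44264, 9127962649, 9389368018, 1109496, 854652, 4503004918670, 5001172433966⟩,
  ⟨32, 44266, 44369, 9392403049, 9656648856, 1112241, 944697, 4505288280536, 5001486510675⟩,
  ⟨32, 44371, 44472, 9659620311, 9926688408, 1123050, 954462, 4507683742652, 5001690113355⟩,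
  ⟨32, 44474, 44573, 9929594111, 10199466820, 1125102, 976170, 4512770426940, 5002284361482⟩,
  ⟨32, 44575, 44672, 10202304621, 10474964717, 1135596, 979824, 4514834135858, 5002669974948⟩,
  ⟨32, 44674, 44770, 10477732493, 10753163185, 1167177, 1061049, 4516723834826, 5003045480272⟩,
  ⟨32, 44772, 44866, 10755858836, 11034043750, 1180974, 1062714, 4518878892979, 5003228388166⟩,
  ⟨32, 44868, 44961, 11036665199, 11317588360, 1183197, 1083261, 4521056361911, 5003763188878⟩,
  ⟨32, 44962, 45054, 11320133556, 11603779375, 1216497, 1086753, 4526719734474, 5004110825270⟩]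

def rows2 : List Row := [
  ⟨64, 45056, 45236, 11609505792, 12184031992, 1234119, 1810623, 4530764979446, 5004873595367⟩,
  ⟨64, 45237, 45412, 12186336331, 12774668045, 1297713, 1816905, 4534758568645, 5005519610452⟩,
  ⟨64, 45414, 45583, 12776801942, 13375559589, 1336161, 1840161, 4550144578254, 5006058814278⟩,
  ⟨64, 45585, 45750, 13377515332, 13986583901, 1380360, 1854660, 4554503092449, 5006721024839⟩,
  ⟨64, 45752, 45912, 13988353925, 14607623126, 1629552, 1870500, 4558173152205, 5007284020989⟩,
  ⟨64, 45913, 46070, 14609200005, 15238563954, 1658343, 1907607, 4561719627809, 5007957942204⟩,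
  ⟨64, 46071, 46223, 15239940395, 15879297334, 1693974, 1932834, 4565449726227, 5008410213519⟩,
  ⟨64, 46225, 46373, 15880466168, 16529718200, 1732431, 1950807, 4569085361895, 5008906293861⟩,
  ⟨64, 46374, 46519, 16530672379, 17189725236, 1977816, 2039340, 4572480800174, 5009263750121⟩,
  ⟨64, 46520, 46661, 17190457826, 17859220651, 1991991, 2065287, 4578218222905, 5009779400082⟩,
  ⟨64, 46662, 46800, 17859724824, 18538109971, 2001630, 2176194, 4581040183339, 5010386089472⟩,
  ⟨64, 46801, 46936, 18538379004, 19226301857, 2014365, 2215173, 4583491287379, 5010811209278⟩,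
  ⟨64, 46937, 47069, 19226329125, 19923707928, 2029215, 2302239, 4588135099190, 5011221151670⟩,
  ⟨64, 47070, 47199, 19923486901, 20630242601, 2068410, 2396694, 4591006192038, 5011567325785⟩,
  ⟨64, 47200, 47326, 20629766839, 21345822946, 2110584, 2419140, 4593720273635, 5011901670940⟩,
  ⟨64, 47327, 47451, 21345086097, 22070368546, 2145009, 2442945, 4595973056114, 5012271000280⟩,
  ⟨64, 47452, 47572, 22069364341, 22803801371, 2163279, 3167679, 4599727010110, 5012538923714⟩,
  ⟨64, 47573, 47692, 22802523620, 23546045657, 2228358, 3174978, 4603564606610, 5012841468068⟩,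
  ⟨64, 47693, 47809, 23544488249, 24297027802, 2267571, 3261459, 4605966820218, 5013218220919⟩,
  ⟨64, 47810, 47924, 24295184697, 25056676255, 2308962, 3277398, 4608951884209, 5013502215264⟩,
  ⟨64, 47925, 48036, 25054541488, 25824921427, 2349651, 3364563, 4612350390168, 5013895651799⟩,
  ⟨64, 48037, 48147, 25822489099, 26601695595, 2369811, 3388035, 4614040656032, 5014048354471⟩,
  ⟨64, 48148, 48255, 26598959877, 27386932825, 2627436, 3394056, 4616550719665, 5014381921885⟩,
  ⟨64, 48256, 48362, 27383887948, 28180568886, 2661114, 3426798, 4618361072624, 5014777958084⟩,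
  ⟨64, 48362, 48466, 28177209147, 28982541180, 2932248, 3443772, 4625670622356, 5015057893952⟩,
  ⟨64, 48467, 48569, 28978860934, 29792788674, 2962911, 3478215, 4627600685379, 5015330100819⟩,
  ⟨64, 48570, 48670, 29788782334, 30611251829, 3031086, 3485730, 4629366153685, 5015561817590⟩,
  ⟨64, 48671, 48770, 30606913865, 31437872544, 3042894, 3520002, 4631456515399, 5015787350765⟩,
  ⟨64, 48770, 48867, 31433197480, 32272594094, 3287793, 3616833, 4633291860323, 5016006965084⟩,
  ⟨64, 48868, 48963, 32267576508, 33115361078, 3293832, 3660420, 4634923827879, 5016312603211⟩,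
  ⟨64, 48964, 49058, 33109995598, 33966119364, 3359604, 3668376, 4638029638005, 5016550905522⟩,
  ⟨64, 49058, 49151, 33960400669, 34824816045, 3371223, 3772335, 4639730475195, 5016754207549⟩,
  ⟨128, 49152, 49333, 34828517376, 36565818788, 5548017, 3828513, 4643963382230, 5017150700483⟩,
  ⟨128, 49333, 49509, 36559008995, 38337968775, 5570094, 4024002, 4647605923059, 5017582422066⟩,
  ⟨128, 49510, 49681, 38330405828, 40140882301, 5652426, 4141974, 4651569542141, 5017917010737⟩,
  ⟨128, 49681, 49847, 40132545997, 41974191314, 5699838, 4277658, 4654124009432, 5018310348844⟩,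
  ⟨128, 49848, 50009, 41965061776, 43837542358, 5755719, 5027295, 4658611424082, 5018686539602⟩,
  ⟨128, 50009, 50167, 43827600015, 45730595608, 5870397, 5117637, 4661277504560, 5018956709828⟩,
  ⟨128, 50167, 50320, 45719821186, 47653024003, 5949813, 5228373, 4663854175018, 5019302049108⟩,
  ⟨128, 50321, 50470, 47641398505, 49604512442, 6007260, 5354112, 4669371308985, 5019674912340⟩,
  ⟨128, 50470, 50616, 49592017139, 51584757059, 6276558, 6094290, 4671835401110, 5019913725059⟩,
  ⟨128, 50616, 50758, 51571373478, 53593464558, 6360393, 6141585, 4674747635807, 5020124244093⟩,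
  ⟨128, 50758, 50897, 53579174472, 55630351598, 6695616, 6175668, 4677118021612, 5020474261128⟩,
  ⟨128, 50897, 51033, 55615137012, 57695144229, 6819294, 6217410, 4680580074662, 5020687243743⟩,
  ⟨128, 51033, 51166, 57678987375, 59787577377, 7083129, 6268737, 4682814565225, 5020995302322⟩,
  ⟨128, 51166, 51296, 59770460703, 61907394359, 7369311, 6391479, 4684951591712, 5021292599295⟩,
  ⟨128, 51296, 51423, 61889300519, 64054346443, 7440033, 6522465, 4686989991364, 5021452116945⟩,
  ⟨128, 51423, 51548, 64035258293, 66228192436, 7514490, 6635982, 4691057009871, 5021698801906⟩,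
  ⟨128, 51548, 51669, 66208093024, 68428698301, 9696171, 6692979, 4693198876504, 5021922489736⟩,
  ⟨128, 51669, 51789, 68407570860, 70655636802, 9721020, 6894912, 4695199806720, 5022182297065⟩,
  ⟨128, 51789, 51906, 70633464747, 72908787177, 9984378, 7016358, 4696943212410, 5022308111862⟩,
  ⟨128, 51906, 52021, 72885554093, 75187934823, 10058448, 7143060, 4705142995730, 5022497782417⟩,
  ⟨128, 52021, 52133, 75163624465, 77492871016, 10322841, 7271265, 4706811166225, 5022707987339⟩,
  ⟨128, 52133, 52244, 77467467299, 79823392634, 10398315, 7336155, 4709096834872, 5022911949275⟩,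
  ⟨128, 52244, 52352, 79796879631, 82179301911, 10420482, 8112846, 4710575176724, 5023109965115⟩,
  ⟨128, 52352, 52459, 82151663846, 84560406196, 10524126, 8217786, 4712620320902, 5023242203168⟩,
  ⟨128, 52458, 52563, 84531627441, 86966517734, 10585758, 9035274, 4714270826498, 5023394088738⟩,
  ⟨128, 52563, 52666, 86936582803, 89397453456, 10694775, 9129855, 4715852269702, 5023530416254⟩,
  ⟨128, 52666, 52767, 89366347003, 91853034785, 10724484, 9338016, 4718088060185, 5023718301966⟩,
  ⟨128, 52767, 52866, 91820741596, 94333087447, 10832223, 9376815, 4719504262925, 5023879657694⟩,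
  ⟨128, 52866, 52964, 94299592442, 96837441301, 11128125, 10115661, 4721263336151, 5024026302081⟩,
  ⟨128, 52964, 53060, 96802729525, 99365930172, 11265105, 10136721, 4722934137143, 5024179362827⟩,
  ⟨128, 53060, 53155, 99329986794, 101918391698, 11291988, 10346232, 4725483624822, 5024288754385⟩,
  ⟨128, 53154, 53248, 101881202008, 104494667181, 11607735, 10386543, 4727060008189, 5024434192990⟩]

def rows3 : List Row := [
  ⟨256, 53248, 53430, 104485552128, 109718042720, 11783739, 16926987, 4729487365224, 5024708377165⟩,
  ⟨256, 53429, 53606, 109677026985, 115034855400, 12378342, 17008122, 4733084142007, 5024951581362⟩,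
  ⟨256, 53606, 53777, 114991217485, 120443954294, 12740367, 17265855, 4735521480015, 5025200740922⟩,
  ⟨256, 53777, 53944, 120397637993, 125944235424, 13155366, 17418018, 4738078940719, 5025438723570⟩,
  ⟨256, 53944, 54106, 125895185329, 131534638584, 15416085, 17597469, 4740895842364, 5025682021615⟩,
  ⟨256, 54105, 54263, 131482800046, 137214144461, 15695616, 17956668, 4744150703268, 5025877414791⟩,
  ⟨256, 54263, 54417, 137159463558, 142981772009, 16039470, 18203394, 4746672536556, 5026093546375⟩,
  ⟨256, 54417, 54567, 142924195515, 148836576064, 16431132, 18389136, 4749327554902, 5026266398131⟩,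
  ⟨256, 54566, 54712, 148776051417, 154777645157, 18664815, 19202799, 4751442108230, 5026459026522⟩,
  ⟨256, 54712, 54855, 154714120436, 160804099518, 18813576, 19466292, 4753289209097, 5026631493083⟩,
  ⟨256, 54854, 54994, 160737523417, 166915089237, 18945858, 20479134, 4757853163581, 5026791353712⟩,
  ⟨256, 54993, 55130, 166845411037, 173109792574, 19080318, 20862498, 4759691339933, 5026945366961⟩,
  ⟨256, 55129, 55263, 173036962127, 179387414404, 19247718, 21660618, 4761629078039, 5027099585713⟩,
  ⟨256, 55262, 55393, 179311382109, 185747184776, 19628580, 22525824, 4763412021324, 5027209827400⟩,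
  ⟨256, 55392, 55520, 185667901558, 192188357584, 20028972, 22754712, 4765751597903, 5027374856473⟩,
  ⟨256, 55519, 55644, 192105774880, 198710209335, 20386029, 22986093, 4767359483877, 5027524069500⟩,
  ⟨256, 55644, 55766, 198624279072, 205312038000, 20565282, 29546598, 4769421059518, 5027668389826⟩,
  ⟨256, 55765, 55885, 205222712581, 211993161951, 21181638, 29630442, 4771003658410, 5027803257075⟩,
  ⟨256, 55885, 56002, 211900394241, 218752918971, 21558828, 30428904, 4772754758048, 5027938542742⟩,
  ⟨256, 56002, 56117, 218656662279, 225590665328, 21947052, 30681984, 4774172971493, 5028051567495⟩,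
  ⟨256, 56117, 56230, 225490873396, 232505774910, 22338966, 31490994, 4776006442963, 5028161169101⟩,
  ⟨256, 56229, 56340, 232402401898, 239497638421, 22543986, 31727550, 4777298979342, 5028280274975⟩,
  ⟨256, 56340, 56449, 239390638894, 246565662619, 24881601, 31810377, 4779131355744, 5028387647141⟩,
  ⟨256, 56448, 56555, 246454991539, 253709269614, 25203999, 32137599, 4780709350798, 5028475898020⟩,
  ⟨256, 56554, 56660, 253594882323, 260927896195, 27668082, 32332494, 4782149243920, 5028585057147⟩,
  ⟨256, 56659, 56762, 260809748410, 268220993212, 27963678, 32668914, 4783522583115, 5028698780474⟩,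
  ⟨256, 56762, 56863, 268099041009, 275588024980, 28596630, 32771442, 4784683503297, 5028790975132⟩,
  ⟨256, 56863, 56963, 275462224790, 283028468730, 28741890, 33103758, 4787433127736, 5028898653592⟩,
  ⟨256, 56962, 57060, 282898777326, 290541814087, 30970191, 34001175, 4788622092850, 5028989523583⟩,
  ⟨256, 57060, 57157, 290408188575, 298127562571, 31042578, 34429350, 4790195563307, 5029084854861⟩,
  ⟨256, 57156, 57251, 297989960383, 305785227138, 31686465, 34520169, 4791350708398, 5029181080517⟩,
  ⟨256, 57250, 57344, 305643606024, 313514331736, 31821303, 35474583, 4792440141763, 5029255487621⟩,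
  ⟨512, 57344, 57526, 313456656384, 329185009300, 51463470, 36031674, 4795273105906, 5029406904876⟩]

def rows4 : List Row := [
  ⟨512, 57525, 57702, 329031080957, 345135991397, 51738438, 37829874, 4797272385801, 5029569191230⟩,
  ⟨512, 57702, 57874, 344973652457, 361363825532, 52536981, 38933877, 4799336222925, 5029715382935⟩,
  ⟨512, 57873, 58040, 361192913981, 377865200039, 53032935, 40198935, 4802267610388, 5029871441341⟩,
  ⟨512, 58040, 58202, 377685555987, 394636934550, 53586363, 47012187, 4804138814356, 5029986650111⟩,
  ⟨512, 58201, 58360, 394448400140, 411675971351, 54694569, 47869113, 4805909465581, 5030114515711⟩,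
  ⟨512, 58359, 58513, 411478390676, 428979367524, 55453485, 48987813, 4810997077070, 5030239495837⟩,
  ⟨512, 58513, 58663, 428772586545, 446544287780, 56039124, 50180088, 4812570406922, 5030366357731⟩,
  ⟨512, 58662, 58809, 446328154251, 464367997906, 58502460, 56908056, 4814413867657, 5030472721213⟩,
  ⟨512, 58808, 58951, 464142361310, 482447858771, 59312217, 57381681, 4816119240615, 5030585659114⟩,
  ⟨512, 58950, 59090, 482212570251, 500781320813, 62373063, 57819639, 4817640449246, 5030694367228⟩,
  ⟨512, 59089, 59226, 500536233113, 519365918974, 63542100, 58254312, 4819351131512, 5030795145828⟩,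
  ⟨512, 59225, 59359, 519110886383, 538199268030, 65954982, 58786698, 4820879043710, 5030898036518⟩,
  ⟨512, 59358, 59489, 537934146327, 557279058273, 68570247, 59957247, 4822336800321, 5030984457534⟩,
  ⟨512, 59488, 59616, 557003704676, 576603051521, 69304575, 61182327, 4824538256814, 5031087455515⟩,
  ⟨512, 59615, 59740, 576317324642, 596169077420, 70023684, 62274432, 4825851605304, 5031171556539⟩]

def rows5 : List Row := [
  ⟨512, 59740, 59862, 595872837218, 615975030008, 89732838, 62832378, 4827029373502, 5031244598556⟩,
  ⟨512, 59861, 59982, 615668137745, 636018864519, 90025068, 64701192, 4828784535571, 5031323326630⟩,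
  ⟨512, 59981, 60099, 635701182724, 656298594413, 92444394, 65856774, 4829955816960, 5031404243195⟩,
  ⟨512, 60098, 60213, 655969986839, 676812288598, 93225351, 67046799, 4831153560939, 5031476628599⟩,
  ⟨512, 60213, 60326, 676472620188, 697558068841, 95685330, 68245518, 4832468153893, 5031559982337⟩,
  ⟨512, 60325, 60436, 697207205694, 718534107346, 96419820, 68878848, 4833477814755, 5031618156286⟩,
  ⟨512, 60436, 60545, 718171916683, 739738624485, 96695184, 75927036, 4834887525375, 5031692539960⟩,
  ⟨512, 60544, 60651, 739364974617, 761169886669, 97723434, 76912806, 4836417721046, 5031764792565⟩,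
  ⟨512, 60650, 60756, 760784646970, 782826204356, 98332779, 84330435, 4837473143468, 5031827209710⟩,
  ⟨512, 60755, 60859, 782429245231, 804705930170, 99363612, 85247472, 4838562192675, 5031889165344⟩,
  ⟨512, 60858, 60960, 804297123029, 826807457138, 99694317, 87171501, 4839578205928, 5031945747077⟩,
  ⟨512, 60959, 61059, 826386674372, 849129217028, 100733223, 87646719, 4840964148730, 5032002014154⟩,
  ⟨512, 61058, 61157, 848696331980, 871669678780, 103442367, 94363239, 4841904558939, 5032061465630⟩,
  ⟨512, 61156, 61253, 871224565726, 894427347030, 104753388, 94609272, 4842866962333, 5032117109295⟩,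
  ⟨512, 61252, 61347, 893969881151, 917400760707, 105053376, 96560724, 4843720907659, 5032166910970⟩,
  ⟨512, 61346, 61440, 916930818073, 940588491718, 107934321, 96996657, 4844612177280, 5032224098092⟩]

def rows6 : List Row := [
  ⟨1, 61440, 61441, 940369969152, 940633989041, 107934321, 154392285, 4844612177280, 5032224098092⟩]

def rows7 : List Row := [
  ⟨511, 61440, 61532, 940151421857, 963989143695, 108682572, 155015112, 4846899956830, 5032276716279⟩,
  ⟨512, 61531, 61622, 963493879196, 987601350812, 109663617, 156029745, 4847726035097, 5032335248415⟩]


theorem chk1 : chk 2000 2048 1216497 1086753 4526719734474 5004110825270 rows1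
    1 0 0 0 1099511627776 = true := by
  decide +kernel
theorem chk2 : chk 2000 8192 11607735 10386543 4727060008189 5024434192990 rows2
    2048 1216497 1086753 4526719734474 5004110825270 = true := by
  decide +kernel
theorem chk3 : chk 2000 16896 51463470 36031674 4795273105906 5029406904876 rows3
    8192 11607735 10386543 4727060008189 5024434192990 = true := by
  decide +kernel
theorem chk4 : chk 775 24576 70023684 62274432 4825851605304 5031171556539 rows4
    16896 51463470 36031674 4795273105906 5029406904876 = true := by
  decide +kernel
theorem chk5 : chk 775 32768 107934321 96996657 4844612177280 5032224098092 rows5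
    24576 70023684 62274432 4825851605304 5031171556539 = true := by
  decide +kernel
theorem chk6 : chk 812 32769 107934321 154392285 4844612177280 5032224098092 rows6
    32768 107934321 96996657 4844612177280 5032224098092 = true := by
  decide +kernel
theorem chk7 : chk 812 33792 109663617 156029745 4847726035097 5032335248415 rows7
    32769 107934321 154392285 4844612177280 5032224098092 = true := by
  decide +kernel

theorem comp_summary :
    (4795273105906 : ℝ) ≤ sT * Rs 16896 ∧ (4844612177280 : ℝ) ≤ sT * Rs 32768 ∧
    sT * Ps 33792 ≤ (5032335248415 : ℝ) ∧ Qs 32769 = 107934321 - 154392285 ∧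
    (∀ m, 16896 ≤ m → m < 32768 → Good 775 m) ∧ (∀ m, 32768 ≤ m → m < 33792 → Good 812 m) := by
  obtain ⟨_, v1, _⟩ := chk_sound (by norm_num) _ chk1 valid_one
  obtain ⟨_, v2, _⟩ := chk_sound (by norm_num) _ chk2 v1
  obtain ⟨_, v3, _⟩ := chk_sound (by norm_num) _ chk3 v2
  obtain ⟨_, v4, g4⟩ := chk_sound (by norm_num) _ chk4 v3
  obtain ⟨_, v5, g5⟩ := chk_sound (by norm_num) _ chk5 v4
  obtain ⟨_, v6, g6⟩ := chk_sound (by norm_num) _ chk6 v5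
  obtain ⟨_, v7, g7⟩ := chk_sound (by norm_num) _ chk7 v6
  refine ⟨by exact_mod_cast v3.c, by exact_mod_cast v5.c, by exact_mod_cast v7.e,
    by rw [← v6.q]; norm_num, fun m h1 h2 => ?_, fun m h1 h2 => ?_⟩
  · rcases Nat.lt_or_ge m 24576 with h | h
    · exact g4 m h1 h
    · exact g5 m h h2
  · rcases Nat.lt_or_ge m 32769 with h | h
    · exact g6 m h1 h
    · exact g7 m h h2

/-! ### The Euler product -/

theorem th_ge : (1.584 : ℝ) ≤ th := by
  have h2 : 0 < Real.log 2 := Real.log_pos (by norm_num)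
  unfold th
  rw [le_div_iff₀ h2]
  have h : Real.log ((2 : ℝ) ^ 84) ≤ Real.log ((3 : ℝ) ^ 53) :=
    Real.log_le_log (by norm_num) (by norm_num)
  rw [Real.log_pow, Real.log_pow] at h
  push_cast at h
  linarith

theorem ff_nonneg (m : ℕ) : 0 ≤ ff m := by unfold ff; positivity

theorem ff_mul {a b : ℕ} (ha : a ≠ 0) (hb : b ≠ 0) : ff (a * b) = ff a * ff b := by
  unfold ff
  rw [cardFactors_mul ha hb, pow_add, Nat.cast_mul,
    Real.mul_rpow (Nat.cast_nonneg _) (Nat.cast_nonneg _), mul_div_mul_comm]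

/-- the odd part of `ff` as a completely multiplicative function -/
noncomputable def fo : ℕ →* ℝ where
  toFun m := if m % 2 = 1 then ff m else 0
  map_one' := by simp [ff]
  map_mul' a b := by
    by_cases ha : a % 2 = 1
    · by_cases hb : b % 2 = 1
      · have : (a * b) % 2 = 1 := by rw [Nat.mul_mod, ha, hb]
        simp only [ha, hb, this, if_true]
        exact ff_mul (by rintro rfl; simp at ha) (by rintro rfl; simp at hb)
      · have hb' : b % 2 = 0 := by omega
        have : (a * b) % 2 = 0 := by rw [Nat.mul_mod, hb']; simp
        simp [hb', this]
    · have ha' : a % 2 = 0 := by omega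
      have : (a * b) % 2 = 0 := by rw [Nat.mul_mod, ha']; simp
      simp [ha', this]

theorem fo_apply (m : ℕ) : fo m = if m % 2 = 1 then ff m else 0 := rfl

theorem fo_nonneg (m : ℕ) : 0 ≤ fo m := by
  rw [fo_apply]; split_ifs
  · exact ff_nonneg m
  · exact le_rfl

theorem ff_prime {p : ℕ} (hp : p.Prime) : ff p = 3 / (p : ℝ) ^ th := by
  unfold ff; rw [cardFactors_apply_prime hp, pow_one]

theorem fo_lt_one {p : ℕ} (hp : p.Prime) : ‖fo p‖ < 1 := by
  rw [Real.norm_of_nonneg (fo_nonneg p), fo_apply]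
  split_ifs with h
  · rw [ff_prime hp]
    have h3 : 3 ≤ p := by have := hp.two_le; omega
    have h3' : (2 : ℝ) < p := by exact_mod_cast h3
    have : (2 : ℝ) ^ th < (p : ℝ) ^ th := Real.rpow_lt_rpow (by norm_num) h3' th_pos
    rw [two_rpow_th] at this
    rw [div_lt_one (by linarith)]
    exact this
  · exact one_pos

theorem prod_eq_Ps (N : ℕ) : ∏ p ∈ N.primesBelow, (1 - fo p)⁻¹ = Ps N := by
  unfold Ps Nat.primesBelow
  rw [Finset.prod_filter]
  have hs : Finset.Ico 1 N ⊆ Finset.range N := by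
    intro m hm; simp only [Finset.mem_Ico] at hm; simpa using hm.2
  rw [← Finset.prod_subset hs]
  · refine Finset.prod_congr rfl fun m _ => ?_
    rw [fo_apply]
    by_cases h1 : m % 2 = 1 <;> by_cases h2 : m.Prime <;> simp [h1, h2]
  · intro m hm hm'
    have : m = 0 := by
      simp only [Finset.mem_range, Finset.mem_Ico] at hm hm'; omega
    subst this
    rw [if_neg Nat.not_prime_zero]

theorem Rs_le_Ps (N : ℕ) : Rs N ≤ Ps N := by
  have hlt : ∀ {p : ℕ}, p.Prime → ‖fo p‖ < 1 := fun hp => fo_lt_one hp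
  have h := (EulerProduct.summable_and_hasSum_smoothNumbers_prod_primesBelow_geometric (f := fo) hlt N).2
  rw [prod_eq_Ps] at h
  have h' : HasSum (N.smoothNumbers.indicator fun m => fo m) (Ps N) :=
    (hasSum_subtype_iff_indicator (f := fun m => fo m)).1 h
  have h2 := sum_le_hasSum (Finset.Ico 1 N)
    (fun i _ => Set.indicator_nonneg (fun m _ => fo_nonneg m) i) h'
  refine le_trans (le_of_eq ?_) h2
  unfold Rs
  refine Finset.sum_congr rfl fun m hm => ?_
  rw [Finset.mem_Ico] at hm
  have : m ∈ N.smoothNumbers := by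
    rw [Nat.mem_smoothNumbers]
    exact ⟨by omega, fun p hp => lt_of_le_of_lt (Nat.le_of_mem_primeFactorsList hp) hm.2⟩
  rw [Set.indicator_of_mem this, fo_apply]

theorem Rs_mono : Monotone Rs := by
  intro a b hab
  unfold Rs
  refine Finset.sum_le_sum_of_subset_of_nonneg (Finset.Ico_subset_Ico_right hab) ?_
  intro m _ _
  exact fo_nonneg m

theorem big_lower {n : ℝ} (hn : 33280 ≤ n) : (14701000 : ℝ) ≤ n ^ th := by
  have h : certL 963493879196 61531 33280 = true := by decide +kernel
  have h1 := certL_sound h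
  have h2 : ((33280 : ℕ) : ℝ) ^ th ≤ n ^ th :=
    Real.rpow_le_rpow (by positivity) (by exact_mod_cast hn) th_pos.le
  push_cast at h1 h2
  linarith

/-- telescoping majorant -/
noncomputable def hh (n : ℝ) : ℝ := n / n ^ th

theorem hh_step {n : ℝ} (hn : 0 < n) : 1.168 / (n + 2) ^ th ≤ hh n - hh (n + 2) := by
  have hb : 1 + th * (2 / n) ≤ (1 + 2 / n) ^ th :=
    one_add_mul_self_le_rpow_one_add
      (by have : 0 < 2 / n := by positivity
          linarith) (by linarith [th_ge])
  have e : (1 + 2 / n) = (n + 2) / n := by field_simp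
  rw [e, Real.div_rpow (by linarith) hn.le] at hb
  have h1 : 0 < n ^ th := Real.rpow_pos_of_pos hn _
  have h2 : 0 < (n + 2) ^ th := Real.rpow_pos_of_pos (by linarith) _
  unfold hh
  rw [le_sub_iff_add_le, ← add_div, div_le_div_iff₀ h2 h1]
  rw [le_div_iff₀ h1] at hb
  have h3 : n * ((1 + th * (2 / n)) * n ^ th) ≤ n * (n + 2) ^ th :=
    mul_le_mul_of_nonneg_left hb hn.le
  have h4 : n * ((1 + th * (2 / n)) * n ^ th) = (n + 2 * th) * n ^ th := by field_simp
  rw [h4] at h3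
  refine le_trans (mul_le_mul_of_nonneg_right ?_ h1.le) h3
  linarith [th_ge]

theorem factor_le {t : ℝ} (h0 : 0 ≤ t) (h1 : t ≤ 0.0005) :
    (1 - t)⁻¹ ≤ Real.exp (1.001 * t) := by
  have h2 : 1.001 * t + 1 ≤ Real.exp (1.001 * t) := Real.add_one_le_exp _
  refine le_trans ?_ h2
  rw [inv_le_iff_one_le_mul₀ (by linarith)]
  nlinarith

theorem Ps_nonneg_step (n : ℕ) : 0 ≤ Ps n := by
  rw [← prod_eq_Ps]
  refine Finset.prod_nonneg fun p hp => inv_nonneg.2 ?_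
  have := fo_lt_one (Nat.prime_of_mem_primesBelow hp)
  rw [Real.norm_of_nonneg (fo_nonneg p)] at this
  linarith

theorem Ps_tail (k : ℕ) : Ps (33792 + 2 * k) ≤
    Ps 33792 * Real.exp (2.572 * (hh 33791 - hh (33791 + 2 * k))) := by
  induction k with
  | zero => simp
  | succ k ih =>
    have e : 33792 + 2 * (k + 1) = (33792 + 2 * k + 1) + 1 := by ring
    rw [e, Ps_succ (by omega), Ps_succ (by omega), if_neg (by omega), mul_one]
    have hn : (0 : ℝ) < 33791 + 2 * k := by positivity
    have hs := hh_step hn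
    have e2 : (33791 + 2 * (k : ℝ)) + 2 = 33791 + 2 * ((k + 1 : ℕ) : ℝ) := by push_cast; ring
    rw [e2] at hs
    have hbig : (14701000 : ℝ) ≤ (33791 + 2 * ((k + 1 : ℕ) : ℝ)) ^ th :=
      big_lower (by have : (0 : ℝ) ≤ ((k + 1 : ℕ) : ℝ) := Nat.cast_nonneg _
                    linarith)
    set X := (33791 + 2 * ((k + 1 : ℕ) : ℝ)) ^ th with hX
    have hXp : 0 < X := by linarith
    have hfac : (if (33792 + 2 * k + 1) % 2 = 1 ∧ (33792 + 2 * k + 1).Prime then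
        (1 - ff (33792 + 2 * k + 1))⁻¹ else 1) ≤ Real.exp (1.001 * (3 / X)) := by
      split_ifs with h
      · have : ff (33792 + 2 * k + 1) = 3 / X := by
          rw [ff_prime h.2, hX]; congr 2; push_cast; ring
        rw [this]
        refine factor_le (by positivity) ?_
        rw [div_le_iff₀ hXp]; linarith
      · exact Real.one_le_exp (by positivity)
    have hexp : Real.exp (1.001 * (3 / X)) ≤
        Real.exp (2.572 * (hh (33791 + 2 * k) - hh (33791 + 2 * ((k + 1 : ℕ) : ℝ)))) := by
      apply Real.exp_le_exp.2
      have : 1.001 * (3 / X) ≤ 2.572 * (1.168 / X) := by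
        rw [← mul_div_assoc, ← mul_div_assoc]
        exact div_le_div_of_nonneg_right (by norm_num) hXp.le
      linarith
    calc _ ≤ Ps 33792 * Real.exp (2.572 * (hh 33791 - hh (33791 + 2 * k))) *
          Real.exp (2.572 * (hh (33791 + 2 * k) - hh (33791 + 2 * ((k + 1 : ℕ) : ℝ)))) := by
          refine mul_le_mul ih (hfac.trans hexp) ?_
            (mul_nonneg (Ps_nonneg_step _) (Real.exp_pos _).le)
          have h1 := Ps_nonneg_step (33792 + 2 * k + 1)
          split_ifs with h
          · have := fo_lt_one h.2
            rw [Real.norm_of_nonneg (fo_nonneg _), fo_apply, if_pos h.1] at this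
            exact inv_nonneg.2 (by linarith)
          · exact zero_le_one
      _ = _ := by
          rw [mul_assoc, ← Real.exp_add]; congr 2; ring

theorem Rs_le (N : ℕ) : Rs N ≤ 4.61 := by
  have h1 : Rs N ≤ Rs (33792 + 2 * N) := Rs_mono (by omega)
  have h2 := Rs_le_Ps (33792 + 2 * N)
  have h3 := Ps_tail N
  have h4 : Ps 33792 ≤ 4.57689 := by
    have := comp_summary.2.2.1
    push_cast at this
    linarith
  have h5 : Real.exp (2.572 * (hh 33791 - hh (33791 + 2 * N))) ≤ 1.006 := by
    have ha : 0 ≤ hh (33791 + 2 * N) := by unfold hh; positivity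
    have hb : hh 33791 ≤ 33791 / 14701000 := by
      unfold hh
      exact div_le_div_of_nonneg_left (by norm_num) (by norm_num) (big_lower (by norm_num))
    have hc : 2.572 * (hh 33791 - hh (33791 + 2 * N)) ≤ 0.00592 := by
      have : (2.572 : ℝ) * (33791 / 14701000) ≤ 0.00592 := by norm_num
      nlinarith
    refine (Real.exp_le_exp.2 hc).trans ?_
    have hd := Real.one_sub_le_exp_neg (0.00592 : ℝ)
    rw [Real.exp_neg] at hd
    have he : Real.exp 0.00592 ≤ (1 - 0.00592)⁻¹ := by
      rw [le_inv_comm₀ (Real.exp_pos _) (by norm_num)]; exact hd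
    refine he.trans (by norm_num)
  have h6 : Ps 33792 * Real.exp (2.572 * (hh 33791 - hh (33791 + 2 * N))) ≤ 4.57689 * 1.006 :=
    mul_le_mul h4 h5 (Real.exp_pos _).le (by norm_num)
  have h7 : (4.57689 : ℝ) * 1.006 ≤ 4.61 := by norm_num
  linarith

/-! ### The recurrence -/

noncomputable def Wn (n : ℕ) : ℝ := ∑ m ∈ Finset.Ico 1 (n + 1), (-3 : ℝ) ^ cardFactors m

noncomputable def Un (n : ℕ) : ℝ :=
  ∑ m ∈ Finset.Ico 1 (n + 1), if m % 2 = 1 then (-3 : ℝ) ^ cardFactors m else 0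

theorem Wn_succ (n : ℕ) : Wn (n + 1) = Wn n + (-3 : ℝ) ^ cardFactors (n + 1) := by
  unfold Wn; rw [Finset.sum_Ico_succ_top (by omega)]

theorem Un_succ (n : ℕ) : Un (n + 1) =
    Un n + if (n + 1) % 2 = 1 then (-3 : ℝ) ^ cardFactors (n + 1) else 0 := by
  unfold Un; rw [Finset.sum_Ico_succ_top (by omega)]

theorem Wn_rec (n : ℕ) : Wn n = Un n - 3 * Wn (n / 2) := by
  induction n with
  | zero => simp [Wn, Un]
  | succ n ih =>
    rw [Wn_succ, Un_succ, ih]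
    by_cases h : (n + 1) % 2 = 1
    · have : (n + 1) / 2 = n / 2 := by omega
      rw [this, if_pos h]; ring
    · obtain ⟨k, hk⟩ : ∃ k, n = 2 * k + 1 := ⟨n / 2, by omega⟩
      subst hk
      have e1 : (2 * k + 1 + 1) / 2 = k + 1 := by omega
      have e2 : (2 * k + 1) / 2 = k := by omega
      have e3 : 2 * k + 1 + 1 = 2 * (k + 1) := by ring
      rw [if_neg h, e1, e2, Wn_succ, e3, cardFactors_mul (by norm_num) (by omega),
        cardFactors_apply_prime Nat.prime_two, pow_add]
      ring

theorem Qs_eq (n : ℕ) : Qs (n + 1) = 4 * Wn n - Un n := by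
  unfold Qs Wn Un
  rw [Finset.mul_sum, ← Finset.sum_sub_distrib]
  refine Finset.sum_congr rfl fun m _ => ?_
  split_ifs <;> ring

theorem Qs_rec (n : ℕ) : Qs (n + 1) = -3 * Qs (n / 2 + 1) + 3 * (Un n - Un (n / 2)) := by
  rw [Qs_eq, Qs_eq]
  have := Wn_rec n
  linarith

theorem ff_mul_self {m : ℕ} (hm : 1 ≤ m) : (3 : ℝ) ^ cardFactors m = (m : ℝ) ^ th * ff m := by
  have : 0 < (m : ℝ) ^ th := Real.rpow_pos_of_pos (by exact_mod_cast hm) _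
  unfold ff; field_simp

theorem term_le {m n : ℕ} (hm : 1 ≤ m) (hmn : m ≤ n) :
    |if m % 2 = 1 then (-3 : ℝ) ^ cardFactors m else 0| ≤
      (n : ℝ) ^ th * if m % 2 = 1 then ff m else 0 := by
  split_ifs
  · rw [abs_pow, abs_neg, abs_of_pos (by norm_num : (0 : ℝ) < 3), ff_mul_self hm]
    refine mul_le_mul_of_nonneg_right ?_ (ff_nonneg m)
    exact Real.rpow_le_rpow (Nat.cast_nonneg _) (by exact_mod_cast hmn) th_pos.le
  · simp

theorem Un_diff {a n : ℕ} (h : a ≤ n) :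
    |Un n - Un a| ≤ (n : ℝ) ^ th * (Rs (n + 1) - Rs (a + 1)) := by
  have e1 : Un n - Un a = ∑ m ∈ Finset.Ico (a + 1) (n + 1),
      if m % 2 = 1 then (-3 : ℝ) ^ cardFactors m else 0 := by
    unfold Un
    rw [← Finset.sum_Ico_consecutive _ (by omega : 1 ≤ a + 1) (by omega : a + 1 ≤ n + 1)]; ring
  have e2 : Rs (n + 1) - Rs (a + 1) = ∑ m ∈ Finset.Ico (a + 1) (n + 1),
      if m % 2 = 1 then ff m else 0 := by
    unfold Rs
    rw [← Finset.sum_Ico_consecutive _ (by omega : 1 ≤ a + 1) (by omega : a + 1 ≤ n + 1)]; ring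
  rw [e1, e2, Finset.mul_sum]
  refine (Finset.abs_sum_le_sum_abs _ _).trans (Finset.sum_le_sum fun m hm => ?_)
  rw [Finset.mem_Ico] at hm
  exact term_le (by omega) (by omega)

theorem pow_mul_le (N j : ℕ) : (3 : ℝ) ^ j * ((N / 2 ^ j : ℕ) : ℝ) ^ th ≤ (N : ℝ) ^ th := by
  have h1 : ((2 : ℝ) ^ j) ^ th = 3 ^ j := by
    rw [pow_rpow_th _ (by norm_num), two_rpow_th]
  rw [← h1, ← Real.mul_rpow (by positivity) (by positivity)]
  refine Real.rpow_le_rpow (by positivity) ?_ th_pos.le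
  have : 2 ^ j * (N / 2 ^ j) ≤ N := Nat.mul_div_le _ _
  exact_mod_cast this

theorem main_ineq (N j : ℕ) : |Qs (N + 1) - (-3) ^ j * Qs (N / 2 ^ j + 1)| ≤
    3 * (N : ℝ) ^ th * (Rs (N + 1) - Rs (N / 2 ^ j + 1)) := by
  induction j with
  | zero => simp
  | succ j ih =>
    have e : N / 2 ^ (j + 1) = (N / 2 ^ j) / 2 := by rw [pow_succ, Nat.div_div_eq_div_mul]
    rw [e]
    have hp := pow_mul_le N j
    set n := N / 2 ^ j with hn
    have hr := Qs_rec n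
    have hu := Un_diff (Nat.div_le_self n 2)
    have hR : 0 ≤ Rs (n + 1) - Rs (n / 2 + 1) :=
      sub_nonneg.2 (Rs_mono (by have := Nat.div_le_self n 2; omega))
    have h1 : Qs (N + 1) - (-3) ^ (j + 1) * Qs (n / 2 + 1) =
        (Qs (N + 1) - (-3) ^ j * Qs (n + 1)) + (-3) ^ j * (3 * (Un n - Un (n / 2))) := by
      rw [hr]; ring
    have h2 : |(-3 : ℝ) ^ j * (3 * (Un n - Un (n / 2)))| ≤
        3 * ((N : ℝ) ^ th * (Rs (n + 1) - Rs (n / 2 + 1))) := by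
      rw [abs_mul, abs_mul, abs_pow, abs_neg, abs_of_pos (by norm_num : (0 : ℝ) < 3)]
      have h3 := mul_le_mul_of_nonneg_left hu (by positivity : (0 : ℝ) ≤ 3 ^ j)
      have h4 := mul_le_mul_of_nonneg_right hp hR
      nlinarith
    rw [h1]
    refine (abs_add_le _ _).trans ?_
    nlinarith

theorem exists_scale (N : ℕ) (hN : 16896 ≤ N) :
    ∃ j, 16896 ≤ N / 2 ^ j ∧ N / 2 ^ j < 33792 := by
  induction N using Nat.strong_induction_on with
  | _ N ih =>
    by_cases h : N < 33792
    · exact ⟨0, by simpa using hN, by simpa using h⟩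
    · obtain ⟨j, h1, h2⟩ := ih (N / 2) (by omega) (by omega)
      refine ⟨j + 1, ?_⟩
      rw [pow_succ, mul_comm, ← Nat.div_div_eq_div_mul]
      exact ⟨h1, h2⟩

theorem Qs_upper (N : ℕ) (hN : 16896 ≤ N) : |Qs (N + 1)| ≤ 3.864 * (N : ℝ) ^ th := by
  obtain ⟨j, h1, h2⟩ := exists_scale N hN
  have hm := main_ineq N j
  have hp := pow_mul_le N j
  set n := N / 2 ^ j with hn
  have hX : 0 ≤ (N : ℝ) ^ th := by positivity
  obtain ⟨c1, c2, _, _, g1, g2⟩ := comp_summary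
  push_cast at c1 c2
  have hR := Rs_le (N + 1)
  have key : ∀ (F c : ℝ), |Qs (n + 1)| ≤ F * (n : ℝ) ^ th → 0 ≤ F → c ≤ Rs (n + 1) →
      F + 3 * (4.61 - c) ≤ 3.864 → |Qs (N + 1)| ≤ 3.864 * (N : ℝ) ^ th := by
    intro F c hF hF0 hc hfin
    have h3 : |(-3 : ℝ) ^ j * Qs (n + 1)| ≤ F * (N : ℝ) ^ th := by
      rw [abs_mul, abs_pow, abs_neg, abs_of_pos (by norm_num : (0 : ℝ) < 3)]
      calc (3 : ℝ) ^ j * |Qs (n + 1)| ≤ 3 ^ j * (F * (n : ℝ) ^ th) :=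
            mul_le_mul_of_nonneg_left hF (by positivity)
        _ = F * (3 ^ j * (n : ℝ) ^ th) := by ring
        _ ≤ _ := mul_le_mul_of_nonneg_left hp hF0
    have h4 : 3 * (N : ℝ) ^ th * (Rs (N + 1) - Rs (n + 1)) ≤ 3 * (N : ℝ) ^ th * (4.61 - c) :=
      mul_le_mul_of_nonneg_left (by linarith) (by positivity)
    have h5 := abs_sub_abs_le_abs_sub (Qs (N + 1)) ((-3) ^ j * Qs (n + 1))
    have h6 := mul_le_mul_of_nonneg_right hfin hX
    linarith
  rcases Nat.lt_or_ge n 32768 with h | h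
  · have hg := g1 n h1 h
    unfold Good at hg
    push_cast at hg
    have hR2 : Rs 16896 ≤ Rs (n + 1) := Rs_mono (by omega)
    exact key 3.1 4.3612 (by linarith) (by norm_num) (by linarith) (by norm_num)
  · have hg := g2 n h h2
    unfold Good at hg
    push_cast at hg
    have hR2 : Rs 32768 ≤ Rs (n + 1) := Rs_mono (by omega)
    exact key 3.248 4.4061 (by linarith) (by norm_num) (by linarith) (by norm_num)

theorem scale_rpow (j : ℕ) : ((2 ^ j * 32768 : ℕ) : ℝ) ^ th = 3 ^ j * 14348907 := by
  have : ((2 ^ j * 32768 : ℕ) : ℝ) = 2 ^ (j + 15) := by push_cast; rw [pow_add]; norm_num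
  rw [this, pow_rpow_th _ (by norm_num), two_rpow_th, pow_add]; norm_num

theorem Qs_lower (j : ℕ) :
    2.625 * ((2 ^ j * 32768 : ℕ) : ℝ) ^ th ≤ |Qs (2 ^ j * 32768 + 1)| := by
  have hm := main_ineq (2 ^ j * 32768) j
  rw [scale_rpow, Nat.mul_div_cancel_left _ (by positivity)] at hm
  obtain ⟨_, c2, _, q, _, _⟩ := comp_summary
  push_cast at c2
  have hR := Rs_le (2 ^ j * 32768 + 1)
  have hR2 : Rs 32768 ≤ Rs (32768 + 1) := Rs_mono (by omega)
  have q' : Qs (32768 + 1) = 107934321 - 154392285 := q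
  have h3 : |(-3 : ℝ) ^ j * Qs (32768 + 1)| = 3 ^ j * 46457964 := by
    rw [abs_mul, abs_pow, abs_neg, abs_of_pos (by norm_num : (0 : ℝ) < 3), q']
    norm_num
  have h4 : 3 * ((3 : ℝ) ^ j * 14348907) * (Rs (2 ^ j * 32768 + 1) - Rs (32768 + 1)) ≤
      3 * (3 ^ j * 14348907) * (4.61 - 4.4061) :=
    mul_le_mul_of_nonneg_left (by linarith) (by positivity)
  have h5 := abs_sub_abs_le_abs_sub ((-3 : ℝ) ^ j * Qs (32768 + 1)) (Qs (2 ^ j * 32768 + 1))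
  rw [abs_sub_comm] at h5
  rw [scale_rpow]
  have h6 : (0 : ℝ) < 3 ^ j := by positivity
  linarith

theorem tendsto_th : Tendsto (fun n : ℕ => (n : ℝ) ^ th) atTop atTop :=
  (tendsto_rpow_atTop th_pos).comp tendsto_natCast_atTop_atTop

theorem Un_small : ∀ᶠ n : ℕ in atTop, |Un n| ≤ 0.001 * (n : ℝ) ^ th := by
  have hb : BddAbove (Set.range Rs) := ⟨4.61, by rintro _ ⟨n, rfl⟩; exact Rs_le n⟩
  obtain ⟨M, hM⟩ := exists_lt_of_lt_ciSup (show (⨆ n, Rs n) - 0.0005 < ⨆ n, Rs n by linarith)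
  filter_upwards [tendsto_th.eventually_ge_atTop (2000 * |Un M|), eventually_ge_atTop M]
    with n h1 h2
  have h3 := Un_diff h2
  have h4 : Rs (n + 1) ≤ ⨆ n, Rs n := le_ciSup hb _
  have h5 : Rs M ≤ Rs (M + 1) := Rs_mono (by omega)
  have h6 : (n : ℝ) ^ th * (Rs (n + 1) - Rs (M + 1)) ≤ (n : ℝ) ^ th * 0.0005 :=
    mul_le_mul_of_nonneg_left (by linarith) (by positivity)
  have h7 := abs_sub_abs_le_abs_sub (Un n) (Un M)
  linarith

theorem Wa_eq (x : ℝ) : Wa 3 x = Wn ⌊x⌋₊ := by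
  unfold Wa Wn
  rfl

theorem upper_ev : ∀ᶠ x : ℝ in atTop, |Wa 3 x| / x ^ th ≤ 0.971 := by
  have hf : Tendsto (fun x : ℝ => ⌊x⌋₊) atTop atTop := tendsto_nat_floor_atTop
  filter_upwards [hf.eventually Un_small, hf.eventually (eventually_ge_atTop 16896),
    eventually_gt_atTop 0] with x h1 h2 h3
  rw [Wa_eq, div_le_iff₀ (Real.rpow_pos_of_pos h3 _)]
  have h4 := Qs_upper _ h2
  rw [Qs_eq] at h4
  have h5 : ((⌊x⌋₊ : ℕ) : ℝ) ^ th ≤ x ^ th :=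
    Real.rpow_le_rpow (Nat.cast_nonneg _) (Nat.floor_le h3.le) th_pos.le
  have h6 := abs_sub_abs_le_abs_sub (4 * Wn ⌊x⌋₊) (Un ⌊x⌋₊)
  rw [abs_mul, abs_of_pos (by norm_num : (0 : ℝ) < 4)] at h6
  have h7 : 0 ≤ ((⌊x⌋₊ : ℕ) : ℝ) ^ th := by positivity
  linarith

theorem lower_freq : ∃ᶠ x : ℝ in atTop, 0.655 ≤ |Wa 3 x| / x ^ th := by
  have hN : Tendsto (fun j : ℕ => 2 ^ j * 32768) atTop atTop :=
    (tendsto_pow_atTop_atTop_of_one_lt (by norm_num : 1 < 2)).atTop_mul_const' (by norm_num)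
  have hR : Tendsto (fun j : ℕ => ((2 ^ j * 32768 : ℕ) : ℝ)) atTop atTop :=
    tendsto_natCast_atTop_atTop.comp hN
  refine hR.frequently (Eventually.frequently ?_)
  filter_upwards [hN.eventually Un_small] with j h1
  have hp : 0 < ((2 ^ j * 32768 : ℕ) : ℝ) ^ th :=
    Real.rpow_pos_of_pos (by positivity) _
  rw [Wa_eq, Nat.floor_natCast, le_div_iff₀ hp]
  have h4 := Qs_lower j
  rw [Qs_eq] at h4
  have h6 := abs_sub (4 * Wn (2 ^ j * 32768)) (Un (2 ^ j * 32768))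
  rw [abs_mul, abs_of_pos (by norm_num : (0 : ℝ) < 4)] at h6
  linarith

theorem s3_value :
    |Filter.limsup (fun x : ℝ => |Wa 3 x| / x ^ (Real.log 3 / Real.log 2)) Filter.atTop - 0.813| ≤
        0.158 ∧
      Filter.limsup (fun x : ℝ => |Wa 3 x| / x ^ (Real.log 3 / Real.log 2)) Filter.atTop < 1 := by
  have hu : Filter.limsup (fun x : ℝ => |Wa 3 x| / x ^ th) Filter.atTop ≤ 0.971 := by
    refine Filter.limsup_le_of_le ?_ upper_ev
    exact Filter.IsCoboundedUnder.of_frequently_ge lower_freq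
  have hl : 0.655 ≤ Filter.limsup (fun x : ℝ => |Wa 3 x| / x ^ th) Filter.atTop :=
    Filter.le_limsup_of_frequently_le lower_freq ⟨0.971, by simpa using upper_ev⟩
  unfold th at hu hl
  refine ⟨abs_le.2 ⟨by linarith, by linarith⟩, by linarith⟩
end

section
/- The product over odd primes ∏_{p prime, p > 2} (1 + 3/(p(p−2))) is at most 2.8917. -/
namespace OddPrimeProd

/-- product of the primes from 17 to 199 -/
def M : ℕ := 259737663725722995446193776434559236652946946050734297205895187308308742463027

/-- a sieve test that every odd prime passes -/
def c (n : ℕ) : Bool :=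
  Nat.blt n 6 || (Nat.beq (Nat.gcd n 15) 1 && (Nat.blt n 14 || (Nat.beq (Nat.gcd n 1001) 1 &&
    (Nat.blt n 200 || Nat.beq (Nat.gcd n M) 1))))

def fc (n : ℕ) : ℕ :=
  bif c n then Nat.succ (1000000000000000 + 3000000000000000 / (n * (n - 2)))
  else 1000000000000000

def F : ℕ → ℕ → ℕ
  | 0, n => fc n
  | d + 1, n => Nat.succ (F d n * F d (n + 2 * 2 ^ d) / 1000000000000000)

lemma M_eq : M = [17, 19, 23, 29, 31, 37, 41, 43, 47, 53, 59, 61, 67, 71, 73, 79, 83, 89, 97, 101, 103, 107, 109, 113, 127, 131, 137, 139, 149, 151, 157, 163, 167, 173, 179, 181, 191, 193, 197, 199].prod := by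
  norm_num [M]

lemma coprime_M (p : ℕ) (hp : p.Prime) (h : 200 ≤ p) : Nat.gcd p M = 1 := by
  refine (Nat.Prime.coprime_iff_not_dvd hp).2 fun hd => ?_
  rw [M_eq] at hd
  obtain ⟨a, ha, hpa⟩ := (Prime.dvd_prod_iff hp.prime).1 hd
  have hb : ∀ a ∈ [17, 19, 23, 29, 31, 37, 41, 43, 47, 53, 59, 61, 67, 71, 73, 79, 83, 89, 97, 101, 103, 107, 109, 113, 127, 131, 137, 139, 149, 151, 157, 163, 167, 173, 179, 181, 191, 193, 197, 199], 0 < a ∧ a < 200 := by decide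
  have := hb a ha
  have := Nat.le_of_dvd this.1 hpa
  omega

lemma coprime_15 (p : ℕ) (hp : p.Prime) (h : 6 ≤ p) : Nat.gcd p 15 = 1 := by
  refine (Nat.Prime.coprime_iff_not_dvd hp).2 fun hd => ?_
  rw [show 15 = 3 * 5 from rfl, hp.dvd_mul] at hd
  rcases hd with hd | hd <;> have := Nat.le_of_dvd (by norm_num) hd <;> omega

lemma coprime_1001 (p : ℕ) (hp : p.Prime) (h : 14 ≤ p) : Nat.gcd p 1001 = 1 := by
  refine (Nat.Prime.coprime_iff_not_dvd hp).2 fun hd => ?_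
  rw [show 1001 = 7 * 11 * 13 from rfl, hp.dvd_mul, hp.dvd_mul] at hd
  rcases hd with (hd | hd) | hd <;> have := Nat.le_of_dvd (by norm_num) hd <;> omega

lemma c_prime (p : ℕ) (hp : p.Prime) : c p = true := by
  have h1 := coprime_15 p hp
  have h2 := coprime_1001 p hp
  have h3 := coprime_M p hp
  simp only [c, Bool.or_eq_true, Bool.and_eq_true, Nat.blt_eq, Nat.beq_eq]
  by_cases a : p < 6
  · exact Or.inl a
  refine Or.inr ⟨h1 (by omega), ?_⟩
  by_cases a : p < 14
  · exact Or.inl a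
  refine Or.inr ⟨h2 (by omega), ?_⟩
  by_cases a : p < 200
  · exact Or.inl a
  exact Or.inr (h3 (by omega))

open Classical in
noncomputable def g (n : ℕ) : ℝ := if n.Prime then 1 + 3 / ((n : ℝ) * ((n : ℝ) - 2)) else 1

lemma term_nonneg (n : ℕ) (h : 3 ≤ n) : 0 ≤ 3 / ((n : ℝ) * ((n : ℝ) - 2)) := by
  have : (3 : ℝ) ≤ n := by exact_mod_cast h
  have : (0 : ℝ) ≤ n - 2 := by linarith
  positivity

lemma one_le_g (n : ℕ) (h : 3 ≤ n) : 1 ≤ g n := by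
  have := term_nonneg n h
  unfold g
  split_ifs <;> linarith

lemma g_le (n : ℕ) (h : 3 ≤ n) : g n ≤ 1 + 3 / ((n : ℝ) * ((n : ℝ) - 2)) := by
  have := term_nonneg n h
  unfold g
  split_ifs <;> linarith

lemma lt_succ_div (a b : ℕ) (hb : 0 < b) : (a : ℝ) / b ≤ (a / b : ℕ) + 1 := by
  rw [div_le_iff₀ (by exact_mod_cast hb)]
  have := (Nat.lt_mul_div_succ a hb).le
  rw [mul_comm]
  exact_mod_cast this

lemma g_le_fc (n : ℕ) (h : 3 ≤ n) : g n * 1000000000000000 ≤ fc n := by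
  by_cases hc : c n = true
  · have h1 := g_le n h
    have h2 := lt_succ_div 3000000000000000 (n * (n - 2)) (Nat.mul_pos (by omega) (by omega))
    rw [Nat.cast_mul, Nat.cast_sub (by omega : 2 ≤ n)] at h2
    simp only [fc, hc, cond_true]
    push_cast at h2 ⊢
    have h3 : (3000000000000000 : ℝ) / ((n : ℝ) * ((n : ℝ) - 2))
      = 1000000000000000 * (3 / ((n : ℝ) * ((n : ℝ) - 2))) := by ring
    linarith
  · have hp : ¬ n.Prime := fun hp => hc (c_prime n hp)
    simp [fc, hc, g, hp]

lemma prod_le_F (d : ℕ) : ∀ n, 3 ≤ n →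
    (∏ i ∈ Finset.range (2 ^ d), g (n + 2 * i)) * 1000000000000000 ≤ F d n := by
  induction d with
  | zero => intro n h; simpa [F] using g_le_fc n h
  | succ d ih =>
    intro n h
    have h1 := ih n h
    have h2 := ih (n + 2 * 2 ^ d) (by omega)
    have h3 := lt_succ_div (F d n * F d (n + 2 * 2 ^ d)) 1000000000000000 (by norm_num)
    rw [pow_succ, mul_two, Finset.prod_range_add]
    simp only [F]
    have e : ∀ i, n + 2 * (2 ^ d + i) = n + 2 * 2 ^ d + 2 * i := fun i => by ring
    simp only [e]
    have p2 : 0 ≤ ∏ i ∈ Finset.range (2 ^ d), g (n + 2 * 2 ^ d + 2 * i) :=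
      Finset.prod_nonneg fun i _ => zero_le_one.trans (one_le_g _ (by omega))
    have h4 := mul_le_mul h1 h2 (by positivity) (by positivity)
    rw [Nat.succ_eq_add_one, Nat.cast_add, Nat.cast_one]
    refine le_trans ?_ h3
    rw [le_div_iff₀ (by norm_num)]
    push_cast
    linarith

set_option maxRecDepth 100000 in
lemma F_val : F 14 3 ≤ 2891560000000000 := Nat.le_of_ble_eq_true (by decide +kernel)

lemma tail (k : ℕ) : (∏ i ∈ Finset.range (16384 + k), g (3 + 2 * i)) * (32769 + 2 * k)
    ≤ 2.8917 * (32769 + 2 * k - 3 / 2) := by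
  induction k with
  | zero =>
    have h := prod_le_F 14 3 le_rfl
    have h2 : (F 14 3 : ℝ) ≤ 2891560000000000 := by exact_mod_cast F_val
    norm_num at h ⊢
    linarith
  | succ k ih =>
    rw [← add_assoc, Finset.prod_range_succ]
    have h1 := g_le (3 + 2 * (16384 + k)) (by omega)
    have h0 := one_le_g (3 + 2 * (16384 + k)) (by omega)
    set P := ∏ i ∈ Finset.range (16384 + k), g (3 + 2 * i)
    set G := g (3 + 2 * (16384 + k))
    push_cast at h1 ⊢
    obtain ⟨x, hx⟩ : ∃ x : ℝ, x = 32769 + 2 * k := ⟨_, rfl⟩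
    have hx0 : (32769 : ℝ) ≤ x := by rw [hx]; linarith [(Nat.cast_nonneg k : (0 : ℝ) ≤ k)]
    rw [← hx] at ih
    rw [show (3 : ℝ) + 2 * (16384 + k) = x + 2 by rw [hx]; ring,
      show x + 2 - 2 = x by ring] at h1
    rw [show (32769 : ℝ) + 2 * (k + 1) = x + 2 by rw [hx]; ring]
    have hP : P ≤ 2.8917 * (x - 3 / 2) / x := by
      rw [le_div_iff₀ (by linarith)]; exact ih
    have hq : 0 ≤ 2.8917 * (x - 3 / 2) / x := by
      apply div_nonneg <;> linarith
    have h3 := mul_le_mul hP h1 (by linarith) hq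
    refine (mul_le_mul_of_nonneg_right h3 (by linarith : 0 ≤ x + 2)).trans ?_
    have : 2.8917 * (x - 3 / 2) / x * (1 + 3 / ((x + 2) * x)) * (x + 2)
      = 2.8917 * ((x - 3 / 2) * (x * (x + 2) + 3)) / x ^ 2 := by
      field_simp
    rw [this, div_le_iff₀ (by positivity)]
    nlinarith

lemma prod_le (K : ℕ) : ∏ i ∈ Finset.range (16384 + K), g (3 + 2 * i) ≤ 2.8917 := by
  have h := tail K
  have hk : (0 : ℝ) ≤ K := Nat.cast_nonneg K
  by_contra hc
  push Not at hc
  nlinarith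

lemma finset_le (s : Finset {p : ℕ // p.Prime ∧ 2 < p}) :
    ∏ p ∈ s, (1 + 3 / ((p.1 : ℝ) * ((p.1 : ℝ) - 2))) ≤ 2.8917 := by
  classical
  have hodd : ∀ p : {p : ℕ // p.Prime ∧ 2 < p}, 3 + 2 * ((p.1 - 3) / 2) = p.1 := by
    rintro ⟨p, hp, h2⟩
    have := hp.eq_two_or_odd
    dsimp only
    omega
  have e : ∏ p ∈ s, (1 + 3 / ((p.1 : ℝ) * ((p.1 : ℝ) - 2)))
      = ∏ i ∈ s.image (fun p => (p.1 - 3) / 2), g (3 + 2 * i) := by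
    rw [Finset.prod_image]
    · refine Finset.prod_congr rfl fun p _ => ?_
      rw [hodd p, g, if_pos p.2.1]
    · intro p _ q _ hpq
      apply Subtype.ext
      rw [← hodd p, ← hodd q]
      dsimp only at hpq
      rw [hpq]
  rw [e]
  set t := s.image (fun p => (p.1 - 3) / 2)
  obtain ⟨K, hK⟩ := t.exists_nat_subset_range
  have hsub : t ⊆ Finset.range (16384 + K) :=
    hK.trans (Finset.range_subset_range.2 (by omega))
  refine le_trans ?_ (prod_le K)
  rw [← Finset.prod_sdiff hsub]
  refine le_mul_of_one_le_left
    (Finset.prod_nonneg fun i _ => zero_le_one.trans (one_le_g _ (by omega))) ?_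
  exact Finset.one_le_prod fun i _ => one_le_g _ (by omega)

end OddPrimeProd

theorem prod_odd_primes_le :
    (∏' p : {p : ℕ // p.Prime ∧ 2 < p}, (1 + 3 / ((p.1 : ℝ) * ((p.1 : ℝ) - 2)))) ≤ 2.8917 := by
  by_cases h : Multipliable
      (fun p : {p : ℕ // p.Prime ∧ 2 < p} => (1 + 3 / ((p.1 : ℝ) * ((p.1 : ℝ) - 2))))
  · exact le_of_tendsto' h.hasProd OddPrimeProd.finset_le
  · rw [tprod_eq_one_of_not_multipliable h]
    norm_num
end

section
/- For all real x ≥ 5, the sum over primes p with 5 ≤ p ≤ x of 1/p is strictly less than log log x. -/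
open Finset

lemma aux_log_ge (p k m : ℕ) (h : 2 ^ m ≤ p ^ k) : (m : ℝ) * Real.log 2 ≤ k * Real.log p := by
  rw [← Real.log_pow, ← Real.log_pow]
  apply Real.log_le_log (by positivity)
  exact_mod_cast h

lemma aux_prod_dvd (n : ℕ) :
    ∏ p ∈ (Icc 1 n).filter Nat.Prime, p ^ (n / p) ∣ n.factorial := by
  apply Finset.prod_dvd_of_isRelPrime
  · intro p hp q hq hpq
    simp only [coe_filter, mem_Icc, Set.mem_ofPred_eq] at hp hq
    exact Nat.coprime_iff_isRelPrime.1 (Nat.Coprime.pow _ _ ((Nat.coprime_primes hp.2 hq.2).2 hpq))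
  · intro p hp
    simp only [mem_filter, mem_Icc] at hp
    rw [hp.2.pow_dvd_factorial_iff (b := Nat.log p n + 2) (by omega)]
    have : n / p = n / p ^ 1 := by simp
    rw [this]
    exact Finset.single_le_sum (f := fun i => n / p ^ i) (fun _ _ => Nat.zero_le _) (by simp)

lemma aux_log_factorial (n : ℕ) (hn : 1 ≤ n) :
    Real.log n.factorial ≤ n * Real.log n - n + Real.log n + 1 := by
  induction n, hn using Nat.le_induction with
  | base => simp
  | succ n hn ih =>
    have hn0 : (0 : ℝ) < n := by exact_mod_cast hn
    rw [Nat.factorial_succ]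
    push_cast
    rw [Real.log_mul (by positivity) (by positivity)]
    -- need (n+1) log n - n + 1 ≤ (n+1) log (n+1) - n
    have h := Real.log_le_sub_one_of_pos (show (0 : ℝ) < n / (n + 1) by positivity)
    rw [Real.log_div (by positivity) (by positivity)] at h
    have h2 : (n : ℝ) / (n + 1) - 1 = - (1 / (n + 1)) := by field_simp; ring
    rw [h2] at h
    have h3 : ((n : ℝ) + 1) * (Real.log n - Real.log (n + 1)) ≤ -1 := by
      calc ((n : ℝ) + 1) * (Real.log n - Real.log (n + 1))
          ≤ (n + 1) * (-(1 / (n + 1))) := by gcongr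
        _ = -1 := by field_simp
    linarith

noncomputable def auxA (n : ℕ) : ℝ := ∑ p ∈ (Icc 5 n).filter Nat.Prime, Real.log p / p

noncomputable def auxS (n : ℕ) : ℝ := ∑ p ∈ (Icc 5 n).filter Nat.Prime, (1 : ℝ) / p

lemma aux_mertens (n : ℕ) (hn : 5 ≤ n) :
    n * (Real.log 2 / 2 + Real.log 3 / 3 + auxA n) ≤ Real.log n.factorial + Real.log 4 * n := by
  have hset : (Icc 1 n).filter Nat.Prime = insert 2 (insert 3 ((Icc 5 n).filter Nat.Prime)) := by
    ext p
    simp only [mem_filter, mem_Icc, mem_insert]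
    constructor
    · rintro ⟨⟨h1, h2⟩, h3⟩
      by_cases h5 : 5 ≤ p
      · exact Or.inr (Or.inr ⟨⟨h5, h2⟩, h3⟩)
      · interval_cases p <;> revert h3 <;> norm_num
    · rintro (rfl | rfl | ⟨⟨h1, h2⟩, h3⟩)
      · exact ⟨⟨by omega, by omega⟩, by norm_num⟩
      · exact ⟨⟨by omega, by omega⟩, by norm_num⟩
      · exact ⟨⟨by omega, by omega⟩, h3⟩
  have hA : Real.log 2 / 2 + Real.log 3 / 3 + auxA n
      = ∑ p ∈ (Icc 1 n).filter Nat.Prime, Real.log p / p := by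
    rw [hset, sum_insert (by simp), sum_insert (by simp), auxA]
    push_cast
    ring
  have hth : ∑ p ∈ (Icc 1 n).filter Nat.Prime, Real.log p ≤ Real.log 4 * n := by
    have := Chebyshev.theta_le_log4_mul_x (x := n) (by positivity)
    rw [Chebyshev.theta] at this
    have he : Icc 1 n = Ioc 0 n := by ext; simp; omega
    rw [he]
    simpa using this
  have hfac : ∑ p ∈ (Icc 1 n).filter Nat.Prime, ((n / p : ℕ) : ℝ) * Real.log p
      ≤ Real.log n.factorial := by
    have h1 := Nat.le_of_dvd (Nat.factorial_pos n) (aux_prod_dvd n)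
    have hpos : 0 < ∏ p ∈ (Icc 1 n).filter Nat.Prime, p ^ (n / p) := by
      apply Finset.prod_pos
      intro p hp
      exact pow_pos (mem_filter.1 hp).2.pos _
    have h2 : Real.log ((∏ p ∈ (Icc 1 n).filter Nat.Prime, p ^ (n / p) : ℕ) : ℝ)
        ≤ Real.log n.factorial := by
      apply Real.log_le_log
      · exact_mod_cast hpos
      · exact_mod_cast h1
    push_cast at h2
    rw [Real.log_prod] at h2
    · simpa [Real.log_pow] using h2
    · intro p hp
      have := (mem_filter.1 hp).2.pos
      positivity
  have hle : (n : ℝ) * ∑ p ∈ (Icc 1 n).filter Nat.Prime, Real.log p / p ≤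
      ∑ p ∈ (Icc 1 n).filter Nat.Prime, ((n / p : ℕ) : ℝ) * Real.log p
      + ∑ p ∈ (Icc 1 n).filter Nat.Prime, Real.log p := by
    rw [mul_sum, ← sum_add_distrib]
    apply sum_le_sum
    intro p hp
    have hp0 : (0 : ℝ) < p := by exact_mod_cast (mem_filter.1 hp).2.pos
    have hl : 0 ≤ Real.log p := Real.log_natCast_nonneg p
    have hd : (n : ℝ) / p ≤ ((n / p : ℕ) : ℝ) + 1 := by
      have := Nat.lt_floor_add_one ((n : ℝ) / p)
      rw [Nat.floor_div_eq_div] at this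
      exact this.le
    calc (n : ℝ) * (Real.log p / p) = n / p * Real.log p := by ring
      _ ≤ (((n / p : ℕ) : ℝ) + 1) * Real.log p := by gcongr
      _ = _ := by ring
  rw [hA]
  linarith

lemma aux_log3 : 1.09 ≤ Real.log 3 := by
  have h := aux_log_ge 3 19 30 (by norm_num)
  have := Real.log_two_gt_d9
  push_cast at h
  linarith

lemma aux_A_le (n : ℕ) (hn : 64 ≤ n) : auxA n ≤ Real.log n - 0.2425 := by
  have hn0 : (64 : ℝ) ≤ n := by exact_mod_cast hn
  have h1 := aux_mertens n (by omega)
  have h2 := aux_log_factorial n (by omega)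
  have h4 : Real.log 4 = 2 * Real.log 2 := by
    rw [show (4 : ℝ) = 2 ^ 2 by norm_num, Real.log_pow]; norm_num
  have h64 : Real.log 64 = 6 * Real.log 2 := by
    rw [show (64 : ℝ) = 2 ^ 6 by norm_num, Real.log_pow]; norm_num
  have hl := Real.log_le_sub_one_of_pos (show (0 : ℝ) < n / 64 by positivity)
  rw [Real.log_div (by positivity) (by positivity), h64] at hl
  have ha := Real.log_two_gt_d9
  have hb := Real.log_two_lt_d9
  have h3 := aux_log3
  rw [h4] at h1
  have key : (n : ℝ) * (Real.log 2 / 2 + Real.log 3 / 3 + auxA n) ≤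
      n * (Real.log n - 1 + 0.0807 + 2 * Real.log 2) := by
    nlinarith
  have := le_of_mul_le_mul_left key (by linarith)
  linarith

lemma aux_step (n : ℕ) (hn : 64 ≤ n) :
    auxS (n + 1) - auxA (n + 1) / Real.log (n + 1 : ℕ) - Real.log (Real.log (n + 1 : ℕ))
        - 0.2425 / Real.log (n + 1 : ℕ)
      ≤ auxS n - auxA n / Real.log n - Real.log (Real.log n) - 0.2425 / Real.log n := by
  have hn0 : (64 : ℝ) ≤ n := by exact_mod_cast hn
  have ha := aux_A_le n hn
  have hL : 0 < Real.log n := Real.log_pos (by linarith)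
  have hLM : Real.log n < Real.log (n + 1 : ℕ) := by
    apply Real.log_lt_log (by linarith); push_cast; linarith
  have hF : auxS (n + 1) - auxA (n + 1) / Real.log (n + 1 : ℕ)
      = auxS n - auxA n / Real.log (n + 1 : ℕ) := by
    have hM : Real.log (n + 1 : ℕ) ≠ 0 := by linarith
    have hI : Icc 5 (n + 1) = insert (n + 1) (Icc 5 n) := by
      ext; simp; omega
    unfold auxS auxA
    rw [hI, filter_insert]
    split_ifs with hp
    · rw [sum_insert (by simp), sum_insert (by simp)]
      field_simp
      ring
    · rfl
  rw [hF]
  generalize Real.log (n + 1 : ℕ) = M at *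
  generalize Real.log n = L at *
  have hM : 0 < M := by linarith
  have hlog := Real.log_le_sub_one_of_pos (show (0 : ℝ) < L / M by positivity)
  rw [Real.log_div (by positivity) (by positivity)] at hlog
  have hd : 0 ≤ 1 / L - 1 / M := by
    have := one_div_le_one_div_of_le hL hLM.le
    linarith
  have h1 : (auxA n + 0.2425) * (1 / L - 1 / M) ≤ L * (1 / L - 1 / M) := by
    apply mul_le_mul_of_nonneg_right _ hd; linarith
  have h2 : L * (1 / L - 1 / M) = 1 - L / M := by field_simp
  have h3 : (auxA n + 0.2425) * (1 / L - 1 / M)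
     = auxA n / L - auxA n / M + 0.2425 / L - 0.2425 / M := by ring
  linarith

lemma aux_mono {m n : ℕ} (h : m ≤ n) : auxS m ≤ auxS n := by
  unfold auxS
  apply sum_le_sum_of_subset_of_nonneg
  · exact filter_subset_filter _ (Icc_subset_Icc_right h)
  · intros; positivity

lemma aux_S64 : auxS 64 ≤ 0.8806 := by
  unfold auxS
  rw [show (Icc 5 64).filter Nat.Prime =
    ({5,7,11,13,17,19,23,29,31,37,41,43,47,53,59,61} : Finset ℕ) by
      ext p
      simp only [mem_filter, mem_Icc, mem_insert, mem_singleton]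
      constructor
      · rintro ⟨⟨h1, h2⟩, h3⟩
        interval_cases p <;> first | omega | (exfalso; revert h3; norm_num)
      · intro h
        refine ⟨by omega, ?_⟩
        have hp : 5 ≤ p ∧ p ≤ 64 := by omega
        obtain ⟨ha, hb⟩ := hp
        interval_cases p <;> first | (exfalso; omega) | norm_num]
  norm_num

lemma aux_S15 : auxS 15 ≤ 0.52 := by
  unfold auxS
  rw [show (Icc 5 15).filter Nat.Prime = ({5,7,11,13} : Finset ℕ) by
      ext p
      simp only [mem_filter, mem_Icc, mem_insert, mem_singleton]
      constructor
      · rintro ⟨⟨h1, h2⟩, h3⟩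
        interval_cases p <;> first | omega | (exfalso; revert h3; norm_num)
      · intro h
        refine ⟨by omega, ?_⟩
        have hp : 5 ≤ p ∧ p ≤ 64 := by omega
        obtain ⟨ha, hb⟩ := hp
        interval_cases p <;> first | (exfalso; omega) | norm_num]
  norm_num

lemma aux_S7 : auxS 7 ≤ 0.343 := by
  unfold auxS
  rw [show (Icc 5 7).filter Nat.Prime = ({5,7} : Finset ℕ) by
      ext p
      simp only [mem_filter, mem_Icc, mem_insert, mem_singleton]
      constructor
      · rintro ⟨⟨h1, h2⟩, h3⟩
        interval_cases p <;> first | omega | (exfalso; revert h3; norm_num)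
      · intro h
        refine ⟨by omega, ?_⟩
        have hp : 5 ≤ p ∧ p ≤ 64 := by omega
        obtain ⟨ha, hb⟩ := hp
        interval_cases p <;> first | (exfalso; omega) | norm_num]
  norm_num

lemma aux_A64 : 2.19 ≤ auxA 64 := by
  unfold auxA
  rw [show (Icc 5 64).filter Nat.Prime =
    ({5,7,11,13,17,19,23,29,31,37,41,43,47,53,59,61} : Finset ℕ) by
      ext p
      simp only [mem_filter, mem_Icc, mem_insert, mem_singleton]
      constructor
      · rintro ⟨⟨h1, h2⟩, h3⟩
        interval_cases p <;> first | omega | (exfalso; revert h3; norm_num)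
      · intro h
        refine ⟨by omega, ?_⟩
        have hp : 5 ≤ p ∧ p ≤ 64 := by omega
        obtain ⟨ha, hb⟩ := hp
        interval_cases p <;> first | (exfalso; omega) | norm_num]
  have l2 := Real.log_two_gt_d9
  have l5 := aux_log_ge 5 4 9 (by norm_num)
  have l7 := aux_log_ge 7 4 11 (by norm_num)
  have l11 := aux_log_ge 11 4 13 (by norm_num)
  have l13 := aux_log_ge 13 4 14 (by norm_num)
  have l17 := aux_log_ge 17 4 16 (by norm_num)
  have l19 := aux_log_ge 19 4 16 (by norm_num)
  have l23 := aux_log_ge 23 4 18 (by norm_num)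
  have l29 := aux_log_ge 29 4 19 (by norm_num)
  have l31 := aux_log_ge 31 4 19 (by norm_num)
  have l37 := aux_log_ge 37 4 20 (by norm_num)
  have l41 := aux_log_ge 41 4 21 (by norm_num)
  have l43 := aux_log_ge 43 4 21 (by norm_num)
  have l47 := aux_log_ge 47 4 22 (by norm_num)
  have l53 := aux_log_ge 53 4 22 (by norm_num)
  have l59 := aux_log_ge 59 4 23 (by norm_num)
  have l61 := aux_log_ge 61 4 23 (by norm_num)
  push_cast at *
  simp only [sum_insert, mem_insert, mem_singleton, sum_singleton, Nat.reduceEqDiff, or_self,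
    not_false_eq_true, Nat.cast_ofNat]
  linarith

lemma aux_log_lower (a : ℝ) (ha : 0 < a) : 1 - 1 / a ≤ Real.log a := by
  have := Real.one_sub_inv_le_log_of_pos ha
  simpa using this

lemma aux_pow2 (k : ℕ) : Real.log ((2 : ℝ) ^ k) = k * Real.log 2 := by simp [Real.log_pow]

lemma aux_large (n : ℕ) (hn : 64 ≤ n) : auxS n < Real.log (Real.log n) := by
  have hind : auxS n - auxA n / Real.log n - Real.log (Real.log n) - 0.2425 / Real.log n
      ≤ auxS 64 - auxA 64 / Real.log (64 : ℕ) - Real.log (Real.log (64 : ℕ))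
        - 0.2425 / Real.log (64 : ℕ) := by
    induction n, hn using Nat.le_induction with
    | base => exact le_rfl
    | succ n hn ih => exact (aux_step n hn).trans ih
  have hn0 : (64 : ℝ) ≤ n := by exact_mod_cast hn
  have hL : 0 < Real.log n := Real.log_pos (by linarith)
  have hA := aux_A_le n hn
  have h1 : auxA n / Real.log n + 0.2425 / Real.log n ≤ 1 := by
    rw [← add_div, div_le_one hL]; linarith
  have h64 : Real.log (64 : ℕ) = 6 * Real.log 2 := by
    have := aux_pow2 6
    norm_num at this ⊢
    exact this
  rw [h64] at hind
  have ha := Real.log_two_gt_d9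
  have hb := Real.log_two_lt_d9
  have hll : 1.42 ≤ Real.log (6 * Real.log 2) := by
    have h2 : Real.log (4 * 1.0397) ≤ Real.log (6 * Real.log 2) :=
      Real.log_le_log (by norm_num) (by linarith)
    have h3 := aux_pow2 2
    rw [Real.log_mul (by norm_num) (by norm_num), show (4 : ℝ) = 2 ^ 2 by norm_num, h3] at h2
    have h4 := aux_log_lower 1.0397 (by norm_num)
    norm_num at h2 h4 ⊢
    linarith
  have hq : 0.58 ≤ auxA 64 / (6 * Real.log 2) + 0.2425 / (6 * Real.log 2) := by
    rw [← add_div, le_div_iff₀ (by linarith)]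
    linarith [aux_A64]
  linarith [aux_S64]

lemma aux_nat (n : ℕ) (hn : 5 ≤ n) : auxS n < Real.log (Real.log n) := by
  have ha := Real.log_two_gt_d9
  by_cases h64 : 64 ≤ n
  · exact aux_large n h64
  have key : ∀ (m : ℕ) (a : ℝ), 1 ≤ m → m ≤ n → 0 < a → a ≤ Real.log m →
      Real.log a ≤ Real.log (Real.log n) := by
    intro m a hm hmn ha0 ham
    have hm0 : (0 : ℝ) < m := by exact_mod_cast hm
    apply Real.log_le_log ha0
    exact ham.trans (Real.log_le_log hm0 (by exact_mod_cast hmn))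
  by_cases h16 : 16 ≤ n
  · have h1 := aux_log_ge 16 1 4 (by norm_num)
    have h2 := key 16 (2 * 1.38) (by norm_num) h16 (by norm_num) (by
      push_cast at h1 ⊢; linarith)
    rw [Real.log_mul (by norm_num) (by norm_num)] at h2
    have h3 := aux_log_lower 1.38 (by norm_num)
    have h4 := aux_mono (show n ≤ 64 by omega)
    have h5 := aux_S64
    norm_num at h2 h3 h5 ⊢
    linarith
  by_cases h8 : 8 ≤ n
  · have h1 := aux_log_ge 8 1 3 (by norm_num)
    have h2 := key 8 2 (by norm_num) h8 (by norm_num) (by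
      push_cast at h1 ⊢; linarith)
    have h4 := aux_mono (show n ≤ 15 by omega)
    have h5 := aux_S15
    norm_num at h2 h5 ⊢
    linarith
  · have h1 := aux_log_ge 5 7 16 (by norm_num)
    have h2 := key 5 1.58 (by norm_num) hn (by norm_num) (by
      push_cast at h1 ⊢; linarith)
    have h3 := aux_log_lower 1.58 (by norm_num)
    have h4 := aux_mono (show n ≤ 7 by omega)
    have h5 := aux_S7
    norm_num at h2 h3 h5 ⊢
    linarith

theorem sum_one_div_prime_lt_log_log :
    ∀ x : ℝ, 5 ≤ x →
      ∑ p ∈ (Finset.Icc 5 ⌊x⌋₊).filter Nat.Prime, (1 : ℝ) / p <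
        Real.log (Real.log x) := by
  intro x hx
  have hn : 5 ≤ ⌊x⌋₊ := Nat.le_floor (by exact_mod_cast hx)
  have h := aux_nat _ hn
  have hn0 : (5 : ℝ) ≤ ⌊x⌋₊ := by exact_mod_cast hn
  refine lt_of_lt_of_le h ?_
  apply Real.log_le_log (Real.log_pos (by linarith))
  exact Real.log_le_log (by linarith) (Nat.floor_le (by linarith))
end

section
/- For all real x ≥ 5, ∑_{m ≤ x, gcd(m,6)=1} 3^{Ω(m)}/m ≤ 1.32·(log x)^3, where the sum is over natural numbers m ≤ x coprime to 6. -/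
open Finset ArithmeticFunction

namespace CopSix

noncomputable def Z : ArithmeticFunction ℝ := ⟨fun n => if n.gcd 6 = 1 then 1 else 0, by simp⟩
noncomputable def F : ArithmeticFunction ℝ :=
  ⟨fun n => if n.gcd 6 = 1 then 3 ^ (cardFactors n) else 0, by simp⟩
noncomputable def M : ArithmeticFunction ℝ :=
  ⟨fun n => if n.gcd 6 = 1 then ((moebius n : ℤ) : ℝ) else 0, by simp⟩

lemma Z_apply (n : ℕ) : Z n = if n.gcd 6 = 1 then 1 else 0 := rfl
lemma F_apply (n : ℕ) : F n = if n.gcd 6 = 1 then 3 ^ (cardFactors n) else 0 := rfl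
lemma M_apply (n : ℕ) : M n = if n.gcd 6 = 1 then ((moebius n : ℤ) : ℝ) else 0 := rfl

lemma gcd_mul (a b : ℕ) : (a * b).gcd 6 = 1 ↔ a.gcd 6 = 1 ∧ b.gcd 6 = 1 :=
  Nat.coprime_mul_iff_left

lemma Z_mult : Z.IsMultiplicative := by
  refine ⟨by simp [Z_apply], fun {m n} _ => ?_⟩
  simp only [Z_apply, gcd_mul]
  split_ifs <;> simp_all

lemma M_mult : M.IsMultiplicative := by
  refine ⟨by simp [M_apply], fun {m n} h => ?_⟩
  simp only [M_apply, gcd_mul]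
  split_ifs <;> simp_all [isMultiplicative_moebius.map_mul_of_coprime h]

lemma F_mult : F.IsMultiplicative := by
  refine ⟨by simp [F_apply], fun {m n} h => ?_⟩
  simp only [F_apply, gcd_mul]
  by_cases h1 : m.gcd 6 = 1 <;> by_cases h2 : n.gcd 6 = 1 <;> simp [h1, h2]
  rw [cardFactors_mul, pow_add]
  · rintro rfl; simp at h1
  · rintro rfl; simp at h2

lemma M_mul_Z : M * Z = 1 := by
  ext n
  have h1 : (((moebius : ArithmeticFunction ℝ) * (zeta : ArithmeticFunction ℝ)) n) =
      (1 : ArithmeticFunction ℝ) n := by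
    rw [coe_moebius_mul_coe_zeta]
  by_cases hn : n.gcd 6 = 1
  · rw [← h1, mul_apply, mul_apply]
    refine Finset.sum_congr rfl fun x hx => ?_
    obtain ⟨hx, h0⟩ := Nat.mem_divisorsAntidiagonal.1 hx
    rw [← hx, gcd_mul] at hn
    have : x.2 ≠ 0 := by rintro h; simp [h] at hn
    simp [M_apply, Z_apply, hn, zeta_apply, this]
  · have : n ≠ 1 := by rintro rfl; simp at hn
    rw [one_apply_ne this, mul_apply]
    refine Finset.sum_eq_zero fun x hx => ?_
    obtain ⟨hx, h0⟩ := Nat.mem_divisorsAntidiagonal.1 hx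
    rw [← hx, gcd_mul] at hn
    simp only [M_apply, Z_apply]
    split_ifs <;> simp_all

lemma supp_mul {f k : ArithmeticFunction ℝ} (hf : ∀ n, n.gcd 6 ≠ 1 → f n = 0)
    (hk : ∀ n, n.gcd 6 ≠ 1 → k n = 0) : ∀ n, n.gcd 6 ≠ 1 → (f * k) n = 0 := by
  intro n hn
  rw [mul_apply]
  refine Finset.sum_eq_zero fun x hx => ?_
  obtain ⟨hx, h0⟩ := Nat.mem_divisorsAntidiagonal.1 hx
  rw [← hx, Ne, gcd_mul] at hn
  by_cases h : x.1.gcd 6 = 1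
  · rw [hk x.2 (fun h' => hn ⟨h, h'⟩), mul_zero]
  · rw [hf _ h, zero_mul]

lemma mulZ_pow (q : ArithmeticFunction ℝ) {p : ℕ} (hp : p.Prime) (h6 : p.gcd 6 = 1) (k : ℕ) :
    (q * Z) (p ^ k) = ∑ j ∈ range (k + 1), q (p ^ j) := by
  rw [mul_apply, Nat.sum_divisorsAntidiagonal (f := fun a b => q a * Z b),
    Nat.sum_divisors_prime_pow hp]
  refine Finset.sum_congr rfl fun j hj => ?_
  have h : (p ^ k / p ^ j).gcd 6 = 1 :=
    Nat.Coprime.coprime_dvd_left (Nat.div_dvd_of_dvd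
      (pow_dvd_pow p (by simpa [Nat.lt_succ_iff] using hj))) (Nat.Coprime.pow_left k h6)
  rw [Z_apply, if_pos h, mul_one]

lemma mulM_pow (f : ArithmeticFunction ℝ) {p : ℕ} (hp : p.Prime) (h6 : p.gcd 6 = 1) (k : ℕ) :
    (f * M) (p ^ (k + 1)) = f (p ^ (k + 1)) - f (p ^ k) := by
  have h : f * M * Z = f := by rw [mul_assoc, M_mul_Z, mul_one]
  have h1 := mulZ_pow (f * M) hp h6 (k + 1)
  have h2 := mulZ_pow (f * M) hp h6 k
  rw [h] at h1 h2
  rw [sum_range_succ] at h1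
  linarith

noncomputable def g : ArithmeticFunction ℝ := F * M * M * M

lemma g_mult : g.IsMultiplicative := ((F_mult.mul M_mult).mul M_mult).mul M_mult

lemma g_ZZZ : g * Z * Z * Z = F := by
  have : g * Z * Z * Z = F * (M * Z) * (M * Z) * (M * Z) := by unfold g; ring
  rw [this, M_mul_Z]; simp

lemma g_supp : ∀ n, n.gcd 6 ≠ 1 → g n = 0 := by
  have hF : ∀ n, n.gcd 6 ≠ 1 → F n = 0 := fun n hn => by simp [F_apply, hn]
  have hM : ∀ n, n.gcd 6 ≠ 1 → M n = 0 := fun n hn => by simp [M_apply, hn]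
  exact supp_mul (supp_mul (supp_mul hF hM) hM) hM

lemma F_pow {p : ℕ} (hp : p.Prime) (h6 : p.gcd 6 = 1) (k : ℕ) : F (p ^ k) = 3 ^ k := by
  have : (p ^ k).gcd 6 = 1 := Nat.Coprime.pow_left k h6
  rw [F_apply, if_pos this, cardFactors_apply_prime_pow hp]

lemma g_pow1 {p : ℕ} (hp : p.Prime) (h6 : p.gcd 6 = 1) : g (p ^ 1) = 0 := by
  have e1 : (F * M) 1 = 1 := (F_mult.mul M_mult).1
  have e2 : (F * M * M) 1 = 1 := ((F_mult.mul M_mult).mul M_mult).1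
  have e0 : F 1 = 1 := F_mult.1
  have := F_pow hp h6 1
  unfold g
  rw [mulM_pow _ hp h6 0, mulM_pow _ hp h6 0, mulM_pow _ hp h6 0]
  simp only [zero_add, pow_zero, e0, e1, e2, this]; norm_num

lemma g_pow2 {p : ℕ} (hp : p.Prime) (h6 : p.gcd 6 = 1) : g (p ^ 2) = 3 := by
  have e1 : (F * M) 1 = 1 := (F_mult.mul M_mult).1
  have e0 : F 1 = 1 := F_mult.1
  have h1 := F_pow hp h6 1
  have h2 := F_pow hp h6 2
  have a1 := mulM_pow F hp h6 0
  have a2 := mulM_pow F hp h6 1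
  have b1 := mulM_pow (F * M) hp h6 0
  have b2 := mulM_pow (F * M) hp h6 1
  have c2 := mulM_pow (F * M * M) hp h6 1
  simp only [zero_add, pow_zero, e0, e1, h1, h2, Nat.reduceAdd] at a1 a2 b1 b2 c2
  unfold g
  rw [c2, b2, b1, a2, a1]; norm_num

lemma g_pow3 {p : ℕ} (hp : p.Prime) (h6 : p.gcd 6 = 1) (k : ℕ) : g (p ^ (k + 3)) = 8 * 3 ^ k := by
  unfold g
  rw [mulM_pow (F * M * M) hp h6 (k + 2), mulM_pow (F * M) hp h6 (k + 2),
    mulM_pow (F * M) hp h6 (k + 1), mulM_pow F hp h6 (k + 2),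
    mulM_pow F hp h6 (k + 1), mulM_pow F hp h6 k]
  simp only [F_pow hp h6]; ring

lemma g_pow_nonneg {p : ℕ} (hp : p.Prime) (k : ℕ) : 0 ≤ g (p ^ k) := by
  by_cases h6 : p.gcd 6 = 1
  · match k with
    | 0 => rw [pow_zero, g_mult.1]; norm_num
    | 1 => rw [g_pow1 hp h6]
    | 2 => rw [g_pow2 hp h6]; norm_num
    | k + 3 => rw [g_pow3 hp h6]; positivity
  · match k with
    | 0 => rw [pow_zero, g_mult.1]; norm_num
    | k + 1 =>
      rw [g_supp]
      rw [pow_succ, Ne, gcd_mul]; tauto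

lemma g_nonneg (n : ℕ) : 0 ≤ g n := by
  rcases eq_or_ne n 0 with rfl | hn
  · simp
  rw [g_mult.multiplicative_factorization g hn]
  refine Finset.prod_nonneg fun p hp => g_pow_nonneg
    (Nat.prime_of_mem_primeFactors (n := n) ?_) _
  rwa [Nat.support_factorization] at hp

lemma conv_le (f k : ArithmeticFunction ℝ) (hf : ∀ n, 0 ≤ f n) (hk : ∀ n, 0 ≤ k n) (N : ℕ) :
    ∑ n ∈ Icc 1 N, (f * k) n / n ≤ (∑ n ∈ Icc 1 N, f n / n) * (∑ n ∈ Icc 1 N, k n / n) := by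
  rw [Finset.sum_mul_sum, ← Finset.sum_product']
  have h0 : ∀ x : ℕ × ℕ, 0 ≤ f x.1 / x.1 * (k x.2 / x.2) := fun x =>
    mul_nonneg (div_nonneg (hf _) (Nat.cast_nonneg _)) (div_nonneg (hk _) (Nat.cast_nonneg _))
  refine le_trans (le_of_eq ?_) (Finset.sum_le_sum_of_subset_of_nonneg
    (Finset.filter_subset (fun x : ℕ × ℕ => x.1 * x.2 ∈ Icc 1 N) _) (fun x _ _ => h0 x))
  rw [← Finset.sum_fiberwise_of_maps_to (t := Icc 1 N) (g := fun x : ℕ × ℕ => x.1 * x.2)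
    (fun x hx => (Finset.mem_filter.1 hx).2)]
  refine Finset.sum_congr rfl fun n hn => ?_
  rw [mul_apply, Finset.sum_div]
  have hn' := Finset.mem_Icc.1 hn
  refine Finset.sum_congr ?_ fun x hx => ?_
  · ext ⟨a, b⟩
    simp only [Nat.mem_divisorsAntidiagonal, Finset.mem_filter, Finset.mem_product]
    constructor
    · rintro ⟨h, h1⟩
      have ha : 0 < a := Nat.pos_of_ne_zero (by rintro rfl; simp at h; omega)
      have hb : 0 < b := Nat.pos_of_ne_zero (by rintro rfl; simp at h; omega)
      refine ⟨⟨⟨?_, ?_⟩, by rw [h]; exact hn⟩, h⟩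
      · rw [Finset.mem_Icc]; exact ⟨ha, by nlinarith⟩
      · rw [Finset.mem_Icc]; exact ⟨hb, by nlinarith⟩
    · rintro ⟨_, h⟩
      exact ⟨h, by omega⟩
  · have hx' : x.1 * x.2 = n := (Finset.mem_filter.1 hx).2
    rw [← hx']; push_cast
    rw [div_mul_div_comm]

lemma Z_nonneg (n : ℕ) : 0 ≤ Z n := by rw [Z_apply]; split_ifs <;> norm_num

lemma mul_nonneg' {f k : ArithmeticFunction ℝ} (hf : ∀ n, 0 ≤ f n) (hk : ∀ n, 0 ≤ k n) (n : ℕ) :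
    0 ≤ (f * k) n := by
  rw [mul_apply]; exact Finset.sum_nonneg fun x _ => mul_nonneg (hf _) (hk _)

lemma hasSum_congr_aux {f h : ℕ → ℝ} {a b : ℝ} (H : HasSum f a) (h1 : ∀ k, h k = f k)
    (h2 : b = a) : HasSum h b := by
  rw [h2, funext h1]; exact H

lemma hasSum_g {p : ℕ} (hp : p.Prime) (h6 : p.gcd 6 = 1) (h5 : 5 ≤ p) :
    HasSum (fun k => g (p ^ k) / ((p ^ k : ℕ) : ℝ)) ((p - 1 : ℝ) ^ 3 / (p ^ 2 * (p - 3))) := by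
  have hp5 : (5 : ℝ) ≤ p := by exact_mod_cast h5
  have hp3 : (p : ℝ) - 3 ≠ 0 := by linarith
  have hp0 : (p : ℝ) ≠ 0 := by linarith
  rw [← hasSum_nat_add_iff' 3]
  have hg := (hasSum_geometric_of_lt_one (r := 3 / (p : ℝ)) (by positivity)
    (by rw [div_lt_one (by linarith)]; linarith)).mul_left (8 / (p : ℝ) ^ 3)
  refine (hasSum_congr_aux hg (fun k => ?_) ?_)
  · rw [g_pow3 hp h6, div_pow, pow_add]; push_cast
    field_simp
  · simp only [Finset.sum_range_succ, Finset.sum_range_zero, g_pow1 hp h6, g_pow2 hp h6, pow_zero,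
      g_mult.1]
    push_cast
    have : 1 - 3 / (p : ℝ) ≠ 0 := by
      rw [show 1 - 3 / (p : ℝ) = (p - 3) / p by field_simp]
      exact div_ne_zero hp3 hp0
    rw [show 1 - 3 / (p : ℝ) = (p - 3) / p by field_simp]
    field_simp
    ring

lemma hasSum_g' {p : ℕ} (h6 : p.gcd 6 ≠ 1) :
    HasSum (fun k => g (p ^ k) / ((p ^ k : ℕ) : ℝ)) 1 := by
  have := hasSum_single (f := fun k => g (p ^ k) / ((p ^ k : ℕ) : ℝ)) 0 (fun k hk => by
    obtain ⟨j, rfl⟩ := Nat.exists_eq_succ_of_ne_zero hk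
    rw [g_supp, zero_div]
    rw [Nat.succ_eq_add_one, pow_succ, Ne, gcd_mul]; tauto)
  simpa [g_mult.1] using this

lemma five_le {p : ℕ} (hp : p.Prime) (h6 : p.gcd 6 = 1) : 5 ≤ p := by
  by_contra h
  have := hp.two_le
  interval_cases p <;> simp_all

lemma summ {p : ℕ} (hp : p.Prime) : Summable (fun k => g (p ^ k) / ((p ^ k : ℕ) : ℝ)) := by
  by_cases h6 : p.gcd 6 = 1
  · exact (hasSum_g hp h6 (five_le hp h6)).summable
  · exact (hasSum_g' h6).summable

noncomputable def e (p : ℕ) : ℝ := ∑' k, g (p ^ k) / ((p ^ k : ℕ) : ℝ)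

lemma e_le {n : ℕ} (hn : n.Prime) (h5 : 5 ≤ n) :
    e n ≤ (n - 1 : ℝ) / (n - 3) * ((n - 1.4) / (n + 0.6)) := by
  have hp5 : (5 : ℝ) ≤ n := by exact_mod_cast h5
  by_cases h6 : n.gcd 6 = 1
  · rw [e, (hasSum_g hn h6 h5).tsum_eq, div_mul_div_comm,
      div_le_div_iff₀ (by have : (0:ℝ) < n - 3 := by linarith
                          positivity)
       (by have : (0:ℝ) < n - 3 := by linarith
           positivity)]
    have h3 : (0:ℝ) ≤ (n - 1) * (n - 3) := mul_nonneg (by linarith) (by linarith)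
    have : (n - 1 : ℝ) ^ 2 * (n + 0.6) ≤ n ^ 2 * (n - 1.4) := by nlinarith
    nlinarith [mul_le_mul_of_nonneg_left this h3]
  · exfalso
    apply h6
    have h1 : Nat.Coprime n (2 * 3) := by
      apply Nat.Coprime.mul_right
      · exact (Nat.coprime_primes hn Nat.prime_two).2 (by omega)
      · exact (Nat.coprime_primes hn Nat.prime_three).2 (by omega)
    exact h1

lemma e_nonneg {p : ℕ} (hp : p.Prime) : 0 ≤ e p :=
  tsum_nonneg fun k => div_nonneg (g_pow_nonneg hp k) (Nat.cast_nonneg _)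

lemma prod_le (k : ℕ) : ∏ p ∈ Nat.primesBelow (2 * k + 4), e p ≤
    1.8 * (2 * k + 2) / (2 * k + 3.6) := by
  induction k with
  | zero =>
    have : Nat.primesBelow (2 * 0 + 4) = {2, 3} := by decide
    rw [this, Finset.prod_pair (by norm_num), e, e, (hasSum_g' (by norm_num)).tsum_eq,
      (hasSum_g' (by norm_num)).tsum_eq]
    norm_num
  | succ k ih =>
    have hnp : ¬ (2 * k + 4).Prime := fun h => by
      have := h.eq_one_or_self_of_dvd 2 ⟨k + 2, by ring⟩
      omega
    have h1 : 2 * (k + 1) + 4 = (2 * k + 4 + 1) + 1 := by ring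
    have hk : (0:ℝ) ≤ k := Nat.cast_nonneg k
    rw [h1, Nat.primesBelow_succ]
    by_cases hp : (2 * k + 4 + 1).Prime
    · rw [if_pos hp, Finset.prod_insert (Nat.notMem_primesBelow _), Nat.primesBelow_succ,
        if_neg hnp]
      refine (mul_le_mul (e_le hp (by omega)) ih
        (Finset.prod_nonneg fun p hp => e_nonneg (Nat.prime_of_mem_primesBelow hp)) ?_).trans ?_
      · push_cast
        exact mul_nonneg (div_nonneg (by linarith) (by linarith))
          (div_nonneg (by linarith) (by linarith))
      · push_cast
        apply le_of_eq
        have a1 : (2 * (k:ℝ) + 4 + 1 - 3) = 2 * k + 2 := by ring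
        have a2 : (2 * (k:ℝ) + 4 + 1 - 1.4) = 2 * k + 3.6 := by ring
        have a3 : (2 * (k:ℝ) + 4 + 1 + 0.6) = 2 * k + 5.6 := by ring
        have a4 : (2 * ((k:ℝ) + 1) + 3.6) = 2 * k + 5.6 := by ring
        rw [a1, a2, a3, a4]
        have b1 : (2 * (k:ℝ) + 2) ≠ 0 := by positivity
        have b2 : (2 * (k:ℝ) + 3.6) ≠ 0 := by positivity
        have b3 : (2 * (k:ℝ) + 5.6) ≠ 0 := by positivity
        rw [div_mul_div_comm, div_mul_div_comm, div_eq_div_iff (by positivity) b3]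
        ring
    · rw [if_neg hp, Nat.primesBelow_succ, if_neg hnp]
      refine ih.trans ?_
      push_cast
      rw [div_le_div_iff₀ (by positivity) (by positivity)]
      nlinarith

lemma sum_g_le (N : ℕ) : ∑ n ∈ Icc 1 N, g n / n ≤ 1.8 := by
  have key := EulerProduct.summable_and_hasSum_smoothNumbers_prod_primesBelow_tsum
    (f := fun n : ℕ => g n / (n : ℝ)) (by simp [g_mult.1])
    (fun {m n} h => by
      rw [g_mult.2 h]; push_cast; rw [div_mul_div_comm])
    (fun {p} hp => by
      refine (summ hp).congr fun k => ?_
      rw [Real.norm_of_nonneg]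
      exact div_nonneg (g_nonneg _) (Nat.cast_nonneg _)) (2 * N + 4)
  have hs : HasSum ((Nat.smoothNumbers (2 * N + 4)).indicator (fun n : ℕ => g n / (n : ℝ)))
      (∏ p ∈ Nat.primesBelow (2 * N + 4), e p) := by
    rw [← hasSum_subtype_iff_indicator]; exact key.2
  clear key
  have h1 : ∑ n ∈ Icc 1 N, g n / n ≤ ∏ p ∈ Nat.primesBelow (2 * N + 4), e p := by
    refine le_trans (le_of_eq ?_) (sum_le_hasSum (Icc 1 N) (fun n _ => ?_) hs)
    · refine Finset.sum_congr rfl fun n hn => ?_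
      rw [Set.indicator_of_mem]
      have := Finset.mem_Icc.1 hn
      exact Nat.mem_smoothNumbers_of_lt (by omega) (by omega)
    · exact Set.indicator_nonneg (fun n _ => div_nonneg (g_nonneg _) (Nat.cast_nonneg _)) n
  refine h1.trans ((prod_le N).trans ?_)
  have hk : (0:ℝ) ≤ N := Nat.cast_nonneg N
  rw [div_le_iff₀ (by positivity)]
  linarith

noncomputable def H (N : ℕ) : ℝ := ∑ n ∈ Icc 1 N, Z n / n

lemma H_succ (N : ℕ) : H (N + 1) = H N + Z (N + 1) / ((N + 1 : ℕ) : ℝ) := by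
  unfold H; rw [Finset.sum_Icc_succ_top (by omega)]

lemma Z_six (N : ℕ) : Z (N+1) + Z (N+2) + Z (N+3) + Z (N+4) + Z (N+5) + Z (N+6) = 2 := by
  have hz : ∀ n, Z n = if (n % 6).gcd 6 = 1 then 1 else 0 := fun n => by
    have : n.gcd 6 = (n % 6).gcd 6 := by rw [Nat.gcd_comm n, Nat.gcd_rec 6 n]
    rw [Z_apply]; simp only [this]
  simp only [hz]
  have : N % 6 < 6 := Nat.mod_lt _ (by norm_num)
  simp only [Nat.add_mod N]
  interval_cases N % 6 <;> norm_num

lemma H_step (N : ℕ) : H (N + 6) ≤ H N + 2 / (N + 1) := by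
  have h : ∀ j : ℕ, 1 ≤ j → Z (N + j) / ((N + j : ℕ) : ℝ) ≤ Z (N + j) / (N + 1) := fun j hj => by
    apply div_le_div_of_nonneg_left (Z_nonneg _) (by positivity)
    push_cast
    have : (1:ℝ) ≤ j := by exact_mod_cast hj
    linarith
  have e1 := H_succ N
  have e2 := H_succ (N + 1)
  have e3 := H_succ (N + 2)
  have e4 := H_succ (N + 3)
  have e5 := H_succ (N + 4)
  have e6 := H_succ (N + 5)
  simp only [add_assoc, Nat.reduceAdd] at e1 e2 e3 e4 e5 e6
  have := h 1 (by norm_num)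
  have := h 2 (by norm_num)
  have := h 3 (by norm_num)
  have := h 4 (by norm_num)
  have := h 5 (by norm_num)
  have := h 6 (by norm_num)
  rw [← Z_six N]
  simp only [add_div]
  linarith

lemma log5 : (1.5 : ℝ) ≤ Real.log 5 := by
  rw [Real.le_log_iff_exp_le (by norm_num)]
  have h := Real.exp_one_lt_d9
  have h2 : Real.exp 1.5 ^ 2 = Real.exp 1 ^ 3 := by
    rw [← Real.exp_nat_mul, ← Real.exp_nat_mul]; norm_num
  have h3 : Real.exp 1 ^ 3 ≤ 2.72 ^ 3 :=
    pow_le_pow_left₀ (Real.exp_pos _).le (by linarith) 3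
  have : Real.exp 1.5 ^ 2 ≤ 5 ^ 2 := by rw [h2]; refine h3.trans (by norm_num)
  exact (pow_le_pow_iff_left₀ (Real.exp_pos _).le (by norm_num) two_ne_zero).1 this

lemma H_le (N : ℕ) (hN : 5 ≤ N) : H N ≤ 0.9 * Real.log N := by
  induction N using Nat.strong_induction_on with
  | _ N ih =>
    rcases lt_or_ge N 11 with h | h
    · have hl : Real.log 5 ≤ Real.log N :=
        Real.log_le_log (by norm_num) (by exact_mod_cast hN)
      have := log5
      have hH : H N ≤ 1.35 := by
        unfold H
        interval_cases N <;> norm_num [Finset.sum_Icc_succ_top, Z_apply]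
      linarith
    · obtain ⟨K, rfl⟩ : ∃ K, N = K + 6 := ⟨N - 6, by omega⟩
      have h1 := ih K (by omega) (by omega)
      have hK : (5:ℝ) ≤ K := by exact_mod_cast (show 5 ≤ K by omega)
      have h2 := H_step K
      have h3 := Real.one_sub_inv_le_log_of_pos (x := ((K:ℝ) + 6) / K) (by positivity)
      rw [Real.log_div (by positivity) (by positivity), inv_div] at h3
      have h4 : 2 / ((K:ℝ) + 1) ≤ 0.9 * (1 - K / (K + 6)) := by
        rw [show 0.9 * (1 - (K:ℝ) / (K + 6)) = 5.4 / (K + 6) by field_simp; ring,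
          div_le_div_iff₀ (by positivity) (by positivity)]
        linarith
      push_cast
      linarith

end CopSix

open CopSix

theorem sum_coprime_six_bound :
    ∀ x : ℝ, 5 ≤ x →
      ∑ m ∈ (Finset.Icc 1 ⌊x⌋₊).filter (fun m => Nat.gcd m 6 = 1),
          (3 : ℝ) ^ (cardFactors m) / m ≤ 1.32 * Real.log x ^ 3 := by
  intro x hx
  have hN : 5 ≤ ⌊x⌋₊ := Nat.le_floor (by exact_mod_cast hx)
  have hlx : Real.log (⌊x⌋₊ : ℝ) ≤ Real.log x :=
    Real.log_le_log (by exact_mod_cast (show 0 < ⌊x⌋₊ by omega)) (Nat.floor_le (by linarith))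
  have hH := H_le _ hN
  generalize ⌊x⌋₊ = N at *
  have h0 : ∑ m ∈ (Finset.Icc 1 N).filter (fun m => Nat.gcd m 6 = 1),
      (3 : ℝ) ^ (cardFactors m) / m = ∑ m ∈ Icc 1 N, F m / m := by
    rw [Finset.sum_filter]
    refine Finset.sum_congr rfl fun m _ => ?_
    rw [F_apply]; split_ifs <;> simp
  have hH0 : 0 ≤ H N :=
    Finset.sum_nonneg fun n _ => div_nonneg (Z_nonneg _) (Nat.cast_nonneg _)
  have n1 := mul_nonneg' g_nonneg Z_nonneg
  have n2 := mul_nonneg' n1 Z_nonneg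
  have c1 := conv_le _ _ n2 Z_nonneg N
  have c2 := conv_le _ _ n1 Z_nonneg N
  have c3 := conv_le _ _ g_nonneg Z_nonneg N
  rw [g_ZZZ] at c1
  have hL : H N ≤ 0.9 * Real.log x := by linarith
  rw [h0]
  calc _ ≤ 1.8 * H N * H N * H N := c1.trans (mul_le_mul_of_nonneg_right (c2.trans
          (mul_le_mul_of_nonneg_right (c3.trans (mul_le_mul_of_nonneg_right (sum_g_le N) hH0))
            hH0)) hH0)
    _ = 1.8 * H N ^ 3 := by ring
    _ ≤ 1.8 * (0.9 * Real.log x) ^ 3 := by gcongr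
    _ ≤ 1.32 * Real.log x ^ 3 := by
      have : 0 ≤ Real.log x := Real.log_nonneg (by linarith)
      have := pow_nonneg this 3
      nlinarith
end
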